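/- (Dihedral sieving for noncrossing partitions by number of blocks; Narayana case.) Let n be odd, 0 ≤ k ≤ n−1, let P ∈ ℤ[s,t] be the unique polynomial with P·{n}_{s,t}·{k}!_{s,t}·{n−k}!_{s,t}·{k+1}!_{s,t}·{n−k−1}!_{s,t} = {n}!_{s,t}·{n}!_{s,t}, and let ζ = exp(2πi/n) ∈ ℂ. Then for every integer ℓ, P(ζ^ℓ + ζ^{−ℓ}, −1) equals the number of noncrossing set partitions of ℤ/nℤ with exactly n−k blocks fixed by the rotation x ↦ x+ℓ; and P(0, 1) equals the number of noncrossing set partitions of ℤ/nℤ with exactly n−k blocks fixed by x ↦ −x. -/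

import Mathlib

open MvPolynomial

/-- The generalized Fibonacci polynomials `{m}_{s,t} ∈ ℤ[s,t]`, with `s = X 0`, `t = X 1`. -/
noncomputable def gfib : ℕ → MvPolynomial (Fin 2) ℤ
  | 0 => 0
  | 1 => 1
  | (m + 2) => X 0 * gfib (m + 1) + X 1 * gfib m

/-- The Fibonacci factorial `{m}!_{s,t}`. -/
noncomputable def gfibFact : ℕ → MvPolynomial (Fin 2) ℤ
  | 0 => 1
  | (m + 1) => gfib (m + 1) * gfibFact m

/-- The primitive `n`-th root of unity `ζ = exp(2πi/n)`. -/
noncomputable def primRoot (n : ℕ) : ℂ := Complex.exp (2 * Real.pi * Complex.I / n)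

/-- A set partition of `ℤ/nℤ` is noncrossing if there are no residues
`a < b < c < d` (as natural numbers in `[0, n)`) with `a, c` in one block and `b, d` in a
different block. -/
def IsNoncrossing {n : ℕ} [NeZero n] (π : Finpartition (Finset.univ : Finset (ZMod n))) :
    Prop :=
  ¬ ∃ (a b c d : ZMod n) (B₁ B₂ : Finset (ZMod n)), B₁ ∈ π.parts ∧ B₂ ∈ π.parts ∧
      B₁ ≠ B₂ ∧ a ∈ B₁ ∧ c ∈ B₁ ∧ b ∈ B₂ ∧ d ∈ B₂ ∧
      a.val < b.val ∧ b.val < c.val ∧ c.val < d.val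

/-!
Lift a partition of `ℤ/nℤ` to an `n`-periodic equivalence relation on `ℤ`. If it is fixed by the
rotation by `m`, where `n = d m` and `d ≥ 3`, its classes unwrap to a noncrossing relation on the
line of period `m`. Such a relation is determined by the openers and closers of its classes in one
period, and any two subsets of equal size `j` occur. Around the circle it has `d j` blocks, and one
more if it has a class meeting every period, which happens when some point lies below all arcs.
For `d = 1` one cuts the circle at a point and obtains Dyck words; the reflection reverses them, so
that a fixed word is determined by its left half. All these words are counted by the reflection
principle for lattice paths, with sums over the number of arcs that telescope.

At `s = w + w⁻¹`, `t = -1` with `w` a primitive `d`-th root of unity, `{m}` vanishes exactly when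
`d ∣ m`, and `{m}` only depends on `m` modulo `d`. Cancelling the factors `{d}` before specialising
shows that `P` takes the value `0` or a product of two binomial coefficients, much as in Lucas's
theorem; at `s = 0`, `t = 1` the same happens with `d = 2`.
-/

section

open Finset

/-! ### Noncrossing equivalence relations on `ℤ` -/

/-- An equivalence relation on `ℤ` is noncrossing if no two of its arcs cross. -/
def IsNoncrossingSetoid (T : Setoid ℤ) : Prop :=
  ∀ ⦃a b c d : ℤ⦄, a < b → b < c → c < d → T a c → T b d → T a b

/-- `x` is an opener of `T` if it is the least element of its class. -/
def IsOpener (T : Setoid ℤ) (x : ℤ) : Prop := ∀ y < x, ¬ T y x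

/-- `x` is a closer of `T` if it is the greatest element of its class. -/
def IsCloser (T : Setoid ℤ) (x : ℤ) : Prop := ∀ y > x, ¬ T x y

/-- `x < y` are consecutive elements of a class of `T`. -/
structure IsConsecutive (T : Setoid ℤ) (x y : ℤ) : Prop where
  lt : x < y
  rel : T x y
  not_rel_of_mem_Ioo : ∀ z ∈ Set.Ioo x y, ¬ T x z

section Consecutive

variable {T T' : Setoid ℤ} {x x' y y' : ℤ}

lemma exists_isConsecutive_right (h : ¬ IsCloser T x) : ∃ y, IsConsecutive T x y := by
  simp only [IsCloser, not_forall, not_not] at h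
  obtain ⟨z, hxz, hz⟩ := h
  obtain ⟨y, ⟨hxy, hy⟩, hmin⟩ := Int.exists_least_of_bdd (P := fun y => x < y ∧ T x y)
    ⟨x, fun y hy => hy.1.le⟩ ⟨z, hxz, hz⟩
  exact ⟨y, hxy, hy, fun w hw hxw => (hmin w ⟨hw.1, hxw⟩).not_gt hw.2⟩

lemma exists_isConsecutive_left (h : ¬ IsOpener T y) : ∃ x, IsConsecutive T x y := by
  simp only [IsOpener, not_forall, not_not] at h
  obtain ⟨z, hzy, hz⟩ := h
  obtain ⟨x, ⟨hxy, hx⟩, hmax⟩ := Int.exists_greatest_of_bdd (P := fun x => x < y ∧ T x y)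
    ⟨y, fun x hx => hx.1.le⟩ ⟨z, hzy, hz⟩
  exact ⟨x, hxy, hx, fun w hw hxw => (hmax w ⟨hw.2, T.trans' (T.symm' hxw) hx⟩).not_gt hw.1⟩

lemma IsConsecutive.right_unique (h : IsConsecutive T x y) (h' : IsConsecutive T x y') :
    y = y' := by
  rcases lt_trichotomy y y' with hlt | rfl | hlt
  · exact absurd h.rel (h'.not_rel_of_mem_Ioo y ⟨h.lt, hlt⟩)
  · rfl
  · exact absurd h'.rel (h.not_rel_of_mem_Ioo y' ⟨h'.lt, hlt⟩)

lemma IsConsecutive.left_unique (h : IsConsecutive T x y) (h' : IsConsecutive T x' y) :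
    x = x' := by
  have hxx' : T x x' := T.trans' h.rel (T.symm' h'.rel)
  rcases lt_trichotomy x x' with hlt | rfl | hlt
  · exact absurd hxx' (h.not_rel_of_mem_Ioo x' ⟨hlt, h'.lt⟩)
  · rfl
  · exact absurd (T.symm' hxx') (h'.not_rel_of_mem_Ioo x ⟨hlt, h.lt⟩)

lemma IsConsecutive.not_isCloser (h : IsConsecutive T x y) : ¬ IsCloser T x :=
  fun hx => hx y h.lt h.rel

lemma IsConsecutive.not_isOpener (h : IsConsecutive T x y) : ¬ IsOpener T y :=
  fun hy => hy x h.lt h.rel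

/-- If `y'` is consecutive to `x` in `T'` but lies strictly inside the arc `x, y` of `T`, then by
noncrossing so does its `T`-predecessor `p`, and the shorter pair `p, y'` contradicts minimality. -/
lemma IsConsecutive.not_lt_of_forall_shorter (hT : IsNoncrossingSetoid T)
    (hop : ∀ z, IsOpener T z → IsOpener T' z) (h : IsConsecutive T x y)
    (h' : IsConsecutive T' x y')
    (ih : ∀ p q, q - p < y' - x → IsConsecutive T p q → IsConsecutive T' p q) : ¬ y' < y := by
  intro hlt
  obtain ⟨p, hp⟩ := exists_isConsecutive_left fun ho => h'.not_isOpener (hop y' ho)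
  rcases lt_trichotomy p x with hpx | rfl | hxp
  · have hpx' : T p x := hT hpx h'.lt hlt hp.rel h.rel
    exact h.not_rel_of_mem_Ioo y' ⟨h'.lt, hlt⟩ (T.trans' (T.symm' hpx') hp.rel)
  · exact h.not_rel_of_mem_Ioo y' ⟨h'.lt, hlt⟩ hp.rel
  · exact hxp.ne (h'.left_unique (ih p y' (by omega) hp))

lemma IsConsecutive.of_isOpener_iff_of_isCloser_iff (hT : IsNoncrossingSetoid T)
    (hT' : IsNoncrossingSetoid T') (hop : ∀ z, IsOpener T z ↔ IsOpener T' z)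
    (hcl : ∀ z, IsCloser T z ↔ IsCloser T' z) (h : IsConsecutive T x y) :
    IsConsecutive T' x y := by
  induction hN : (y - x).toNat using Nat.strong_induction_on generalizing T T' x y with
  | _ N ih =>
    have hxy := h.lt
    obtain ⟨y', h'⟩ := exists_isConsecutive_right fun hc => h.not_isCloser ((hcl x).2 hc)
    rcases lt_trichotomy y y' with hlt | rfl | hlt
    · refine absurd hlt (h'.not_lt_of_forall_shorter hT' (fun z => (hop z).2) h ?_)
      exact fun p q hpq hc => ih (q - p).toNat (by have := hc.lt; omega) hT' hT
        (fun z => (hop z).symm) (fun z => (hcl z).symm) hc rfl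
    · exact h'
    · refine absurd hlt (h.not_lt_of_forall_shorter hT (fun z => (hop z).1) h' ?_)
      exact fun p q hpq hc => ih (q - p).toNat (by have := hc.lt; omega) hT hT' hop hcl hc rfl

lemma rel_of_forall_isConsecutive (h : ∀ x y, IsConsecutive T x y → T' x y) (hxy : x < y)
    (hT : T x y) : T' x y := by
  induction hN : (y - x).toNat using Nat.strong_induction_on generalizing x with
  | _ N ih =>
    obtain ⟨z, hz⟩ := exists_isConsecutive_right fun hc : IsCloser T x => hc y hxy hT
    have hxz := hz.lt
    rcases lt_trichotomy z y with hzy | rfl | hyz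
    · exact T'.trans' (h x z hz)
        (ih (y - z).toNat (by omega) hzy (T.trans' (T.symm' hz.rel) hT) rfl)
    · exact h x z hz
    · exact absurd hT (hz.not_rel_of_mem_Ioo y ⟨hxy, hyz⟩)

lemma le_of_forall_isConsecutive (h : ∀ x y, IsConsecutive T x y → T' x y) : T ≤ T' := by
  intro x y hxy
  rcases lt_trichotomy x y with hlt | rfl | hlt
  · exact rel_of_forall_isConsecutive h hlt hxy
  · exact T'.refl' x
  · exact T'.symm' (rel_of_forall_isConsecutive h hlt (T.symm' hxy))

theorem IsNoncrossingSetoid.ext_of_isOpener_of_isCloser (hT : IsNoncrossingSetoid T)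
    (hT' : IsNoncrossingSetoid T') (hop : ∀ z, IsOpener T z ↔ IsOpener T' z)
    (hcl : ∀ z, IsCloser T z ↔ IsCloser T' z) : T = T' :=
  le_antisymm
    (le_of_forall_isConsecutive fun _ _ h =>
      (h.of_isOpener_iff_of_isCloser_iff hT hT' hop hcl).rel)
    (le_of_forall_isConsecutive fun _ _ h =>
      (h.of_isOpener_iff_of_isCloser_iff hT' hT (fun z => (hop z).symm)
        (fun z => (hcl z).symm)).rel)

end Consecutive

section Periodic

variable {T : Setoid ℤ} {p : ℤ}

lemma rel_add_mul_iff (hT : T.comap (· + p) = T) (k x y : ℤ) :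
    T (x + k * p) (y + k * p) ↔ T x y := by
  have hstep : ∀ x y, T (x + p) (y + p) ↔ T x y := fun x y => by
    conv_rhs => rw [← hT, Setoid.comap_rel]
  induction k using Int.induction_on generalizing x y with
  | zero => simp
  | succ k ih => simpa only [add_mul, one_mul, add_assoc] using (hstep _ _).trans (ih x y)
  | pred k ih =>
    rw [← hstep]
    simpa only [show ∀ z, z + (-k - 1) * p + p = z + -k * p by intro z; ring] using ih x y

lemma comap_add_mul_eq (hT : T.comap (· + p) = T) (k : ℤ) : T.comap (· + k * p) = T :=
  Setoid.ext fun x y => rel_add_mul_iff hT k x y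

lemma isOpener_add_mul_iff (hT : T.comap (· + p) = T) (k x : ℤ) :
    IsOpener T (x + k * p) ↔ IsOpener T x := by
  refine ⟨fun h y hy hyx => h (y + k * p) (by omega) ((rel_add_mul_iff hT k y x).2 hyx),
    fun h y hy hyx => h (y - k * p) (by omega) ?_⟩
  rwa [← rel_add_mul_iff hT k, sub_add_cancel]

lemma isCloser_add_mul_iff (hT : T.comap (· + p) = T) (k x : ℤ) :
    IsCloser T (x + k * p) ↔ IsCloser T x := by
  refine ⟨fun h y hy hxy => h (y + k * p) (by omega) ((rel_add_mul_iff hT k x y).2 hxy),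
    fun h y hy hxy => h (y - k * p) (by omega) ?_⟩
  rwa [← rel_add_mul_iff hT k, sub_add_cancel]

lemma IsConsecutive.add_mul (hT : T.comap (· + p) = T) (k : ℤ) {x y : ℤ}
    (h : IsConsecutive T x y) : IsConsecutive T (x + k * p) (y + k * p) := by
  refine ⟨by have := h.lt; omega, (rel_add_mul_iff hT k x y).2 h.rel, fun z hz hxz => ?_⟩
  refine h.not_rel_of_mem_Ioo (z - k * p) ⟨by have := hz.1; omega, by have := hz.2; omega⟩ ?_
  rwa [← rel_add_mul_iff hT k, sub_add_cancel]

lemma eq_of_add_mul_eq_add_mul {i j k l : ℤ} (hi : i ∈ Ico 0 p)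
    (hj : j ∈ Ico 0 p) (h : i + k * p = j + l * p) : i = j := by
  rw [mem_Ico] at hi hj
  have := congrArg (· % p) h
  simpa [Int.emod_eq_of_lt, hi, hj] using this

lemma emod_mem_Ico (hp : 0 < p) (x : ℤ) : x % p ∈ Ico 0 p :=
  mem_Ico.2 ⟨Int.emod_nonneg _ hp.ne', Int.emod_lt_of_pos _ hp⟩

open Classical in
lemma card_not_isCloser_le (hp : 0 < p) (hT : T.comap (· + p) = T) :
    #{i ∈ Ico 0 p | ¬ IsCloser T i} ≤ #{j ∈ Ico 0 p | ¬ IsOpener T (j + 1)} := by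
  refine card_le_card_of_forall_subsingleton
    (fun i j => ∃ k, IsConsecutive T i (j + 1 + k * p)) (fun i hi => ?_) ?_
  · obtain ⟨y, hy⟩ := exists_isConsecutive_right (mem_filter.1 hi).2
    have hmod : (y - 1) % p + 1 + (y - 1) / p * p = y := by
      have := Int.emod_add_ediv_mul (y - 1) p
      omega
    refine ⟨(y - 1) % p, mem_filter.2 ⟨emod_mem_Ico hp _, ?_⟩, (y - 1) / p, hmod.symm ▸ hy⟩
    rw [← isOpener_add_mul_iff hT ((y - 1) / p), hmod]
    exact hy.not_isOpener
  · rintro j - i ⟨hi, k, hk⟩ i' ⟨hi', k', hk'⟩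
    have hshift := hk.add_mul hT (k' - k)
    rw [show j + 1 + k * p + (k' - k) * p = j + 1 + k' * p by ring] at hshift
    refine eq_of_add_mul_eq_add_mul (mem_filter.1 hi).1 (mem_filter.1 hi').1
      (k := k' - k) (l := 0) ?_
    rw [hshift.left_unique hk', zero_mul, add_zero]

open Classical in
lemma card_not_isOpener_le (hp : 0 < p) (hT : T.comap (· + p) = T) :
    #{j ∈ Ico 0 p | ¬ IsOpener T (j + 1)} ≤ #{i ∈ Ico 0 p | ¬ IsCloser T i} := by
  refine card_le_card_of_forall_subsingleton
    (fun j i => ∃ k, IsConsecutive T i (j + 1 + k * p)) (fun j hj => ?_) ?_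
  · obtain ⟨x, hx⟩ := exists_isConsecutive_left (mem_filter.1 hj).2
    have hmod : x + -(x / p) * p = x % p := by linarith [Int.emod_add_ediv_mul x p]
    have hshift := hmod ▸ hx.add_mul hT (-(x / p))
    exact ⟨x % p, mem_filter.2 ⟨emod_mem_Ico hp _, hshift.not_isCloser⟩, _, hshift⟩
  · rintro i - j ⟨hj, k, hk⟩ j' ⟨hj', k', hk'⟩
    refine eq_of_add_mul_eq_add_mul (mem_filter.1 hj).1 (mem_filter.1 hj').1
      (k := k) (l := k') ?_
    linarith [hk.right_unique hk']

open Classical in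
theorem card_isOpener_eq_card_isCloser (hp : 0 < p) (hT : T.comap (· + p) = T) :
    #{i ∈ Ico 0 p | IsOpener T (i + 1)} = #{i ∈ Ico 0 p | IsCloser T i} := by
  have hcl : #{i ∈ Ico 0 p | IsCloser T i} + #{i ∈ Ico 0 p | ¬ IsCloser T i} = #(Ico 0 p) :=
    card_filter_add_card_filter_not _
  have hop : #{i ∈ Ico 0 p | IsOpener T (i + 1)} + #{i ∈ Ico 0 p | ¬ IsOpener T (i + 1)} =
    #(Ico 0 p) := card_filter_add_card_filter_not _
  have hle := card_not_isCloser_le hp hT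
  have hge := card_not_isOpener_le hp hT
  omega

end Periodic

/-! ### Level relations -/

/-- The equivalence relation on `ℤ` drawn by levels: `V x` is the level of the point `x`, and
`F z` that of the gap between `z` and `z + 1`. Two points are related if they are at the same
level and no gap between them is lower. -/
def levelSetoid (V F : ℤ → ℤ) : Setoid ℤ where
  r x y := V x = V y ∧ ∀ z ∈ Set.Ico (min x y) (max x y), V x ≤ F z
  iseqv := by
    refine ⟨fun x => ⟨rfl, fun z hz => ?_⟩, fun {x y} h => ⟨h.1.symm, fun z hz => ?_⟩,
      fun {x y z} hxy hyz => ⟨hxy.1.trans hyz.1, fun u hu => ?_⟩⟩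
    · rw [min_self, max_self, Set.Ico_self] at hz
      exact absurd hz (Set.notMem_empty z)
    · rw [min_comm, max_comm] at hz
      exact h.1 ▸ h.2 z hz
    · rw [Set.mem_Ico] at hu
      by_cases hu' : u ∈ Set.Ico (min x y) (max x y)
      · exact hxy.2 u hu'
      · rw [Set.mem_Ico] at hu'
        exact hxy.1 ▸ hyz.2 u (by rw [Set.mem_Ico]; omega)

section Level

variable {V F : ℤ → ℤ}

lemma levelSetoid_rel_of_le {x y : ℤ} (h : x ≤ y) :
    levelSetoid V F x y ↔ V x = V y ∧ ∀ z ∈ Set.Ico x y, V x ≤ F z := by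
  change (V x = V y ∧ ∀ z ∈ Set.Ico (min x y) (max x y), V x ≤ F z) ↔ _
  rw [min_eq_left h, max_eq_right h]

lemma isNoncrossingSetoid_levelSetoid (hFV : ∀ z, F z ≤ V z) :
    IsNoncrossingSetoid (levelSetoid V F) := by
  intro a b c d hab hbc hcd hac hbd
  rw [levelSetoid_rel_of_le (by omega)] at hac hbd ⊢
  have hVab : V a ≤ V b := (hac.2 b ⟨hab.le, hbc⟩).trans (hFV b)
  have hVba : V b ≤ V a := hac.1 ▸ (hbd.2 c ⟨hbc.le, hcd⟩).trans (hFV c)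
  exact ⟨le_antisymm hVab hVba, fun z hz => hac.2 z ⟨hz.1, hz.2.trans hbc⟩⟩

lemma isOpener_levelSetoid_add_one_iff (hFV : ∀ z, F z ≤ V z) (hVF : ∀ z, V z ≤ F z + 1)
    (hVF' : ∀ z, V (z + 1) ≤ F z + 1) (hlow : ∀ x, ∃ y < x, V y ≤ V x) (x : ℤ) :
    IsOpener (levelSetoid V F) (x + 1) ↔ F x < V (x + 1) := by
  constructor
  · intro hop
    by_contra! hF
    obtain ⟨y, ⟨hyx, hy⟩, hmax⟩ := Int.exists_greatest_of_bdd
      (P := fun y => y < x + 1 ∧ V y ≤ V (x + 1)) ⟨x + 1, fun y hy => hy.1.le⟩ (hlow (x + 1))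
    have hbetween : ∀ z, y < z → z ≤ x → V (x + 1) < V z := fun z hyz hzx => by
      by_contra! hz
      exact (hmax z ⟨by omega, hz⟩).not_gt hyz
    have hFy : V (x + 1) ≤ F y := by
      rcases eq_or_lt_of_le (Int.le_of_lt_add_one hyx) with rfl | hlt
      · exact hF
      · linarith [hbetween (y + 1) (by omega) (by omega), hVF' y]
    refine hop y hyx ((levelSetoid_rel_of_le hyx.le).2 ⟨le_antisymm hy (hFy.trans (hFV y)), ?_⟩)
    rintro z ⟨hyz, hzx⟩
    rcases eq_or_lt_of_le hyz with rfl | hlt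
    · exact hy.trans hFy
    · linarith [hbetween z hlt (by omega), hVF z]
  · intro hF y hy hrel
    rw [levelSetoid_rel_of_le hy.le] at hrel
    exact (hrel.1 ▸ hrel.2 x ⟨by omega, by omega⟩).not_gt hF

lemma isCloser_levelSetoid_iff (hFV : ∀ z, F z ≤ V (z + 1)) (hVF : ∀ z, V z ≤ F z + 1)
    (hhigh : ∀ x, ∃ y > x, V y ≤ V x) (x : ℤ) :
    IsCloser (levelSetoid V F) x ↔ F x < V x := by
  constructor
  · intro hcl
    by_contra! hF
    obtain ⟨y, ⟨hxy, hy⟩, hmin⟩ := Int.exists_least_of_bdd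
      (P := fun y => x < y ∧ V y ≤ V x) ⟨x, fun y hy => hy.1.le⟩ (hhigh x)
    have hbetween : ∀ z, x < z → z < y → V x < V z := fun z hxz hzy => by
      by_contra! hz
      exact (hmin z ⟨hxz, hz⟩).not_gt hzy
    have hFz : ∀ z ∈ Set.Ico x y, V x ≤ F z := by
      rintro z ⟨hxz, hzy⟩
      rcases eq_or_lt_of_le hxz with rfl | hlt
      · exact hF
      · linarith [hbetween z hlt hzy, hVF z]
    have hVy : F (y - 1) ≤ V y := by simpa using hFV (y - 1)
    exact hcl y hxy ((levelSetoid_rel_of_le hxy.le).2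
      ⟨le_antisymm ((hFz (y - 1) ⟨by omega, by omega⟩).trans hVy) hy, hFz⟩)
  · intro hF y hy hrel
    rw [levelSetoid_rel_of_le hy.le] at hrel
    exact (hrel.2 x ⟨le_rfl, hy⟩).not_gt hF

end Level

lemma comap_levelSetoid {V F : ℤ → ℤ} {p : ℤ} (hV : ∀ x, V (x + p) = V x)
    (hF : ∀ x, F (x + p) = F x) : (levelSetoid V F).comap (· + p) = levelSetoid V F := by
  ext x y
  change (V (x + p) = V (y + p) ∧ ∀ z ∈ Set.Ico (min (x + p) (y + p)) (max (x + p) (y + p)),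
    V (x + p) ≤ F z) ↔ V x = V y ∧ ∀ z ∈ Set.Ico (min x y) (max x y), V x ≤ F z
  rw [hV, hV, min_add_add_right, max_add_add_right]
  refine and_congr_right fun _ => ⟨fun h z hz => ?_, fun h z hz => ?_⟩
  · rw [← hF]
    exact h (z + p) ⟨add_le_add_left hz.1 p, add_lt_add_left hz.2 p⟩
  · rw [← sub_add_cancel z p, hF]
    exact h (z - p) ⟨le_sub_iff_add_le.2 hz.1, sub_lt_iff_lt_add.2 hz.2⟩

/-! ### Gap words -/

/-- A word recording, for each gap `i | i + 1` of `ℤ`, whether `i + 1` is an opener (`i ∈ w.1`)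
and whether `i` is a closer (`i ∈ w.2`). -/
abbrev GapWord : Type := Finset ℤ × Finset ℤ

/-- The gap words of length `m`, with gaps `0, …, m - 1`. -/
noncomputable def gapWords (m : ℕ) : Finset GapWord :=
  (Ico (0 : ℤ) m).powerset ×ˢ (Ico (0 : ℤ) m).powerset

/-- The gap words of length `m` with as many openers as closers. -/
noncomputable def balancedWords (m : ℕ) : Finset GapWord := {w ∈ gapWords m | #w.1 = #w.2}

/-- The number of arcs open at the point `i`, relative to the point `0`. -/
def height (w : GapWord) (i : ℤ) : ℤ := #{x ∈ w.1 | x < i} - #{x ∈ w.2 | x < i}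

/-- The number of arcs crossing the gap `i | i + 1`, relative to the point `0`. -/
def gapHeight (w : GapWord) (i : ℤ) : ℤ := height w i - if i ∈ w.2 then 1 else 0

section GapWord

variable {m : ℕ} {w : GapWord} {i x : ℤ}

lemma mem_gapWords : w ∈ gapWords m ↔ w.1 ⊆ Ico (0 : ℤ) m ∧ w.2 ⊆ Ico (0 : ℤ) m := by
  rw [gapWords, mem_product, mem_powerset, mem_powerset]

lemma mem_balancedWords : w ∈ balancedWords m ↔ w ∈ gapWords m ∧ #w.1 = #w.2 := mem_filter

lemma card_filter_lt_add_one (A : Finset ℤ) (i : ℤ) :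
    (#{x ∈ A | x < i + 1} : ℤ) = #{x ∈ A | x < i} + if i ∈ A then 1 else 0 := by
  split_ifs with hi
  · rw [show {x ∈ A | x < i + 1} = insert i {x ∈ A | x < i} by grind, card_insert_of_notMem
      (by simp), Nat.cast_succ]
  · rw [show {x ∈ A | x < i + 1} = {x ∈ A | x < i} by grind, add_zero]

lemma height_add_one (w : GapWord) (i : ℤ) :
    height w (i + 1) = gapHeight w i + if i ∈ w.1 then 1 else 0 := by
  rw [gapHeight, height, height, card_filter_lt_add_one, card_filter_lt_add_one]
  ring

lemma height_zero (hw : w ∈ gapWords m) : height w 0 = 0 := by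
  rw [mem_gapWords] at hw
  have hneg {A : Finset ℤ} (hA : A ⊆ Ico (0 : ℤ) m) : {x ∈ A | x < 0} = ∅ :=
    filter_false_of_mem fun x hx => (mem_Ico.1 (hA hx)).1.not_gt
  rw [height, hneg hw.1, hneg hw.2, sub_self]

lemma height_length (hw : w ∈ gapWords m) : height w m = #w.1 - #w.2 := by
  rw [mem_gapWords] at hw
  have hall {A : Finset ℤ} (hA : A ⊆ Ico (0 : ℤ) m) : {x ∈ A | x < (m : ℤ)} = A :=
    filter_true_of_mem fun x hx => (mem_Ico.1 (hA hx)).2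
  rw [height, hall hw.1, hall hw.2]

lemma gapHeight_le_height (w : GapWord) (i : ℤ) : gapHeight w i ≤ height w i := by
  rw [gapHeight]; split_ifs <;> omega

lemma height_emod_add_one (hm : 0 < m) (hw : w ∈ balancedWords m) (x : ℤ) :
    height w ((x + 1) % m) = height w (x % m + 1) := by
  obtain ⟨hw, hcard⟩ := mem_balancedWords.1 hw
  have hlt := Int.emod_lt_of_pos x (Int.natCast_pos.2 hm)
  rcases eq_or_lt_of_le (Int.add_one_le_of_lt hlt) with heq | hlt
  · rw [← Int.emod_add_emod, heq, Int.emod_self, height_zero hw, height_length hw, hcard, sub_self]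
  · have hnonneg := Int.emod_nonneg x (Int.natCast_pos.2 hm).ne'
    rw [← Int.emod_add_emod, Int.emod_eq_of_lt (by omega) hlt]

/-- The equivalence relation on `ℤ` drawn by the periodic extension of a gap word. -/
def relOfWord (m : ℕ) (w : GapWord) : Setoid ℤ :=
  levelSetoid (fun x => height w (x % m)) (fun x => gapHeight w (x % m))

open Classical in
/-- The gap word of length `m` recording the openers and closers of a relation. -/
noncomputable def wordOfRel (m : ℕ) (T : Setoid ℤ) : GapWord :=
  ({i ∈ Ico (0 : ℤ) m | IsOpener T (i + 1)}, {i ∈ Ico (0 : ℤ) m | IsCloser T i})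

lemma mem_fst_wordOfRel {T : Setoid ℤ} :
    i ∈ (wordOfRel m T).1 ↔ i ∈ Ico (0 : ℤ) m ∧ IsOpener T (i + 1) := by
  classical exact mem_filter

lemma mem_snd_wordOfRel {T : Setoid ℤ} :
    i ∈ (wordOfRel m T).2 ↔ i ∈ Ico (0 : ℤ) m ∧ IsCloser T i := by
  classical exact mem_filter

/-- The noncrossing equivalence relations on `ℤ` invariant under translation by `m`. -/
def periodicNoncrossing (m : ℕ) : Set (Setoid ℤ) :=
  {T | IsNoncrossingSetoid T ∧ T.comap (· + (m : ℤ)) = T}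

lemma relOfWord_mem_periodicNoncrossing (m : ℕ) (w : GapWord) :
    relOfWord m w ∈ periodicNoncrossing m :=
  ⟨isNoncrossingSetoid_levelSetoid fun _ => gapHeight_le_height w _,
    comap_levelSetoid (by simp) (by simp)⟩

lemma isOpener_relOfWord_add_one_iff (hm : 0 < m) (hw : w ∈ balancedWords m) (x : ℤ) :
    IsOpener (relOfWord m w) (x + 1) ↔ x % m ∈ w.1 := by
  have hstep := fun z => (height_emod_add_one hm hw z).trans (height_add_one w _)
  rw [relOfWord, isOpener_levelSetoid_add_one_iff (fun _ => gapHeight_le_height w _)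
    (fun z => by rw [gapHeight]; split_ifs <;> omega)
    (fun z => by rw [hstep]; split_ifs <;> omega) (fun x => ⟨x - m, by omega, by simp⟩), hstep]
  split_ifs with h <;> simp [h]

lemma isCloser_relOfWord_iff (hm : 0 < m) (hw : w ∈ balancedWords m) (x : ℤ) :
    IsCloser (relOfWord m w) x ↔ x % m ∈ w.2 := by
  rw [relOfWord, isCloser_levelSetoid_iff
    (fun z => by rw [height_emod_add_one hm hw, height_add_one]; split_ifs <;> omega)
    (fun z => by rw [gapHeight]; split_ifs <;> omega) (fun x => ⟨x + m, by omega, by simp⟩),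
    gapHeight]
  split_ifs with h <;> simp [h]

lemma wordOfRel_mem_balancedWords (hm : 0 < m) {T : Setoid ℤ} (hT : T ∈ periodicNoncrossing m) :
    wordOfRel m T ∈ balancedWords m :=
  mem_balancedWords.2 ⟨mem_gapWords.2 ⟨fun _ hi => (mem_fst_wordOfRel.1 hi).1,
    fun _ hi => (mem_snd_wordOfRel.1 hi).1⟩,
    card_isOpener_eq_card_isCloser (Int.natCast_pos.2 hm) hT.2⟩

lemma wordOfRel_relOfWord (hm : 0 < m) (hw : w ∈ balancedWords m) :
    wordOfRel m (relOfWord m w) = w := by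
  have hsub := mem_gapWords.1 (mem_balancedWords.1 hw).1
  ext i
  · rw [mem_fst_wordOfRel, isOpener_relOfWord_add_one_iff hm hw, mem_Ico]
    refine ⟨fun ⟨hi, h⟩ => Int.emod_eq_of_lt hi.1 hi.2 ▸ h, fun h => ?_⟩
    have hi := mem_Ico.1 (hsub.1 h)
    exact ⟨hi, (Int.emod_eq_of_lt hi.1 hi.2).symm ▸ h⟩
  · rw [mem_snd_wordOfRel, isCloser_relOfWord_iff hm hw, mem_Ico]
    refine ⟨fun ⟨hi, h⟩ => Int.emod_eq_of_lt hi.1 hi.2 ▸ h, fun h => ?_⟩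
    have hi := mem_Ico.1 (hsub.2 h)
    exact ⟨hi, (Int.emod_eq_of_lt hi.1 hi.2).symm ▸ h⟩

lemma relOfWord_wordOfRel (hm : 0 < m) {T : Setoid ℤ} (hT : T ∈ periodicNoncrossing m) :
    relOfWord m (wordOfRel m T) = T := by
  have hw := wordOfRel_mem_balancedWords hm hT
  have hmod := emod_mem_Ico (Int.natCast_pos.2 hm)
  refine (relOfWord_mem_periodicNoncrossing m _).1.ext_of_isOpener_of_isCloser hT.1
    (fun z => ?_) fun z => ?_
  · rw [← sub_add_cancel z 1, isOpener_relOfWord_add_one_iff hm hw, mem_fst_wordOfRel,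
      and_iff_right (hmod _), ← isOpener_add_mul_iff hT.2 ((z - 1) / m), add_right_comm,
      Int.emod_add_ediv_mul]
  · rw [isCloser_relOfWord_iff hm hw, mem_snd_wordOfRel, and_iff_right (hmod _),
      ← isCloser_add_mul_iff hT.2 (z / m), Int.emod_add_ediv_mul]

/-- A balanced gap word has an open level if some point lies below all gaps; the class of this
point in the periodic extension is then infinite. -/
def HasOpenLevel (m : ℕ) (w : GapWord) : Prop :=
  ∃ x ∈ Ico (0 : ℤ) m, ∀ z ∈ Ico (0 : ℤ) m, height w x ≤ gapHeight w z

lemma exists_relOfWord_add_iff (hm : 0 < m) (w : GapWord) :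
    (∃ x, relOfWord m w x (x + m)) ↔ HasOpenLevel m w := by
  have hm' := Int.natCast_pos.2 hm
  have hrel (x : ℤ) : relOfWord m w x (x + m) ↔
      ∀ z ∈ Ico (0 : ℤ) m, height w (x % m) ≤ gapHeight w z := by
    rw [relOfWord, levelSetoid_rel_of_le (by omega), Int.add_emod_right, and_iff_right rfl]
    refine ⟨fun h z hz => ?_, fun h z _ => h _ (emod_mem_Ico hm' z)⟩
    have hz' := mem_Ico.1 hz
    have hshift := h (x + (z - x) % m) ⟨by have := Int.emod_nonneg (z - x) hm'.ne'; omega,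
      by have := Int.emod_lt_of_pos (z - x) hm'; omega⟩
    rwa [Int.add_emod_emod, add_sub_cancel, Int.emod_eq_of_lt hz'.1 hz'.2] at hshift
  refine ⟨fun ⟨x, hx⟩ => ⟨x % m, emod_mem_Ico hm' x, (hrel x).1 hx⟩, fun ⟨x, hx, h⟩ => ⟨x, ?_⟩⟩
  rw [mem_Ico] at hx
  rwa [hrel, Int.emod_eq_of_lt hx.1 hx.2]

lemma invOn_relOfWord_wordOfRel (hm : 0 < m) :
    Set.InvOn (relOfWord m) (wordOfRel m) (periodicNoncrossing m) (balancedWords m) :=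
  ⟨fun _ => relOfWord_wordOfRel hm, fun _ => wordOfRel_relOfWord hm⟩

end GapWord

/-! ### Wrapping a line around a circle -/

/-- An `n`-periodic equivalence relation on `ℤ`, that is, one on `ℤ/nℤ`, is cyclically
noncrossing if no two of its chords cross. -/
def IsCyclicNoncrossing (n : ℕ) (s : Setoid ℤ) : Prop :=
  (∀ x, s x (x + n)) ∧ ∀ ⦃a b c d : ℤ⦄, a < b → b < c → c < d → d < a + n → s a c → s b d → s a b

/-- The relation identifying the points whose `T`-classes agree modulo `n`. -/
def wrap (n : ℕ) (T : Setoid ℤ) : Setoid ℤ := Setoid.ker fun x => {z : ℤ | ∃ k : ℤ, T x (z + k * n)}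

section Wrap

variable {T s : Setoid ℤ} {m n : ℕ} {x y : ℤ}

lemma exists_add_mul_mem_Ico (hn : 0 < n) (x y : ℤ) : ∃ k : ℤ, y + k * n ∈ Set.Ico x (x + n) := by
  have hn0 : (0 : ℤ) < n := by omega
  have := Int.emod_add_ediv_mul (y - x) n
  have := Int.emod_nonneg (y - x) hn0.ne'
  have := Int.emod_lt_of_pos (y - x) hn0
  exact ⟨-((y - x) / n), by linarith, by linarith⟩

lemma wrap_rel (hT : T.comap (· + (n : ℤ)) = T) : wrap n T x y ↔ ∃ k : ℤ, T x (y + k * n) := by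
  rw [wrap, Setoid.ker_def, Set.ext_iff]
  refine ⟨fun h => (h y).2 ⟨0, by simp⟩, fun ⟨k, hk⟩ z => ⟨?_, ?_⟩⟩
  · rintro ⟨l, hl⟩
    refine ⟨l - k, (rel_add_mul_iff hT k _ _).1 (T.trans' (T.symm' hk) ?_)⟩
    rwa [sub_mul, ← add_sub_assoc, sub_add_cancel]
  · rintro ⟨l, hl⟩
    refine ⟨l + k, T.trans' hk ?_⟩
    rw [add_mul, ← add_assoc]
    exact (rel_add_mul_iff hT k _ _).2 hl

lemma wrap_rel_of_rel (hT : T.comap (· + (n : ℤ)) = T) (h : T x y) : wrap n T x y :=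
  (wrap_rel hT).2 ⟨0, by simpa using h⟩

lemma IsNoncrossingSetoid.rel_add_of_abs_le (hnc : IsNoncrossingSetoid T)
    (hT : T.comap (· + (m : ℤ)) = T) (hm : 0 < m) (hxy : m ≤ |x - y|) (h : T x y) :
    T x (x + m) := by
  have hshift (u v : ℤ) : T (u + m) (v + m) ↔ T u v := by simpa using rel_add_mul_iff hT 1 u v
  have hforward (u v : ℤ) (huv : u + m ≤ v) (h : T u v) : T u (u + m) := by
    rcases eq_or_lt_of_le huv with rfl | hlt
    · exact h
    · exact hnc (by omega) hlt (by omega) h ((hshift u v).2 h)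
  rcases le_abs.1 hxy with hle | hle
  · have hy := hforward y x (by omega) (T.symm' h)
    exact T.trans' (T.trans' h hy) ((hshift y x).2 (T.symm' h))
  · exact hforward x y (by omega) h

lemma rel_add_mul_of_rel_add (hT : T.comap (· + (m : ℤ)) = T) (h : T x (x + m)) (k : ℤ) :
    T x (x + k * m) := by
  induction k using Int.induction_on with
  | zero => simp
  | succ k ih =>
    have := (rel_add_mul_iff hT k x (x + m)).2 h
    rw [add_right_comm, add_assoc, ← add_one_mul] at this
    exact T.trans' ih this
  | pred k ih =>
    have := (rel_add_mul_iff hT (-k - 1) x (x + m)).2 h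
    rw [add_right_comm, add_assoc, ← add_one_mul, sub_add_cancel] at this
    exact T.trans' ih (T.symm' this)

/-- A chord `x, y` of the circle comes from one of the two arcs of the line joining neighbouring
lifts of `x` and `y`, since longer arcs force the whole infinite class. -/
lemma IsNoncrossingSetoid.rel_or_rel_sub_of_wrap (hnc : IsNoncrossingSetoid T)
    (hT : T.comap (· + (n : ℤ)) = T) (hn : 0 < n) (hxy : x < y) (hyx : y < x + n)
    (h : wrap n T x y) : T x y ∨ T (y - n) x := by
  obtain ⟨k, hk⟩ := (wrap_rel hT).1 h
  by_cases hk01 : k = 0 ∨ k = -1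
  · rcases hk01 with rfl | rfl
    · exact Or.inl (by simpa using hk)
    · exact Or.inr (T.symm' (by simpa [sub_eq_add_neg] using hk))
  · have hlong : (n : ℤ) ≤ |x - (y + k * n)| := by
      rcases (by omega : 1 ≤ k ∨ k ≤ -2) with hk | hk
      · exact le_abs.2 (Or.inr (by nlinarith))
      · exact le_abs.2 (Or.inl (by nlinarith))
    have hxk := rel_add_mul_of_rel_add hT (hnc.rel_add_of_abs_le hT hn hlong hk) k
    exact Or.inl ((rel_add_mul_iff hT k x y).1 (T.trans' (T.symm' hxk) hk))

lemma IsNoncrossingSetoid.isCyclicNoncrossing_wrap (hnc : IsNoncrossingSetoid T)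
    (hT : T.comap (· + (n : ℤ)) = T) (hn : 0 < n) : IsCyclicNoncrossing n (wrap n T) := by
  refine ⟨fun x => (wrap_rel hT).2 ⟨-1, by simp⟩,
    fun a b c d hab hbc hcd hda hac hbd => ?_⟩
  have hshift (u v : ℤ) : T (u - n) (v - n) ↔ T u v := by
    simpa [sub_eq_add_neg] using rel_add_mul_iff hT (-1) u v
  rcases hnc.rel_or_rel_sub_of_wrap hT hn (hab.trans hbc) (by omega) hac with hac' | hac' <;>
    rcases hnc.rel_or_rel_sub_of_wrap hT hn (hbc.trans hcd) (by omega) hbd with hbd' | hbd'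
  · exact wrap_rel_of_rel hT (hnc hab hbc hcd hac' hbd')
  · have hda' := hnc (by omega) hab hbc hbd' hac'
    exact wrap_rel_of_rel hT (T.trans' (T.symm' hda') hbd')
  · have hbc' := (hshift b c).1
      (hnc (by omega) (by omega) (by omega) ((hshift b d).2 hbd') hac')
    exact (wrap n T).trans' hac (wrap_rel_of_rel hT (T.symm' hbc'))
  · have hcd' := hnc (by omega) (by omega) hab hac' hbd'
    exact wrap_rel_of_rel hT (T.trans' (T.symm' hac') (T.trans' hcd' hbd'))

lemma comap_wrap_eq (hT : T.comap (· + (n : ℤ)) = T) (hTm : T.comap (· + (m : ℤ)) = T) :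
    (wrap n T).comap (· + (m : ℤ)) = wrap n T := by
  ext x y
  rw [Setoid.comap_rel, wrap_rel hT, wrap_rel hT]
  refine exists_congr fun k => ?_
  rw [add_right_comm]
  simpa using rel_add_mul_iff hTm 1 x (y + k * n)

lemma comap_add_eq_of_forall_rel_add (hs : ∀ x, s x (x + n)) : s.comap (· + (n : ℤ)) = s :=
  Setoid.ext fun u v => ⟨fun h => s.trans' (hs u) (s.trans' h (s.symm' (hs v))),
    fun h => s.trans' (s.symm' (hs u)) (s.trans' h (hs v))⟩

lemma IsCyclicNoncrossing.comap_add_eq (hs : IsCyclicNoncrossing n s) :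
    s.comap (· + (n : ℤ)) = s :=
  comap_add_eq_of_forall_rel_add hs.1

lemma IsCyclicNoncrossing.rel_add_mul (hs : IsCyclicNoncrossing n s) (k x : ℤ) :
    s x (x + k * n) :=
  rel_add_mul_of_rel_add hs.comap_add_eq (hs.1 x) k

end Wrap

section Unwrap

variable {T s : Setoid ℤ} {m n : ℕ} {x y z : ℤ}

/-- The symmetric relation on lifts from which a rotation-invariant relation is unwrapped: nearby
points are related as on the circle, and all points of an infinite class are related. -/
def IsUnwrapRel (m : ℕ) (s : Setoid ℤ) (x y : ℤ) : Prop := s x y ∧ (s x (x + m) ∨ |x - y| < m)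

lemma IsNoncrossingSetoid.rel_iff_isUnwrapRel_wrap (hnc : IsNoncrossingSetoid T)
    (hT : T.comap (· + (m : ℤ)) = T) (hm : 0 < m) {d : ℕ} (hd : 2 ≤ d) (hn : n = d * m) :
    T x y ↔ IsUnwrapRel m (wrap n T) x y := by
  have hTn : T.comap (· + (n : ℤ)) = T := by
    simpa only [hn, Nat.cast_mul] using comap_add_mul_eq hT d
  have hkn (k : ℤ) : k * n = k * d * m := by rw [hn, Nat.cast_mul, mul_assoc]
  constructor
  · refine fun h => ⟨wrap_rel_of_rel hTn h, (lt_or_ge |x - y| m).symm.imp_left fun hle => ?_⟩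
    exact wrap_rel_of_rel hTn (hnc.rel_add_of_abs_le hT hm hle h)
  rintro ⟨hxy, hcase⟩
  obtain ⟨k, hk⟩ := (wrap_rel hTn).1 hxy
  suffices hinf : k = 0 ∨ T x (x + m) by
    rcases hinf with rfl | hinf
    · simpa using hk
    · have hxk := rel_add_mul_of_rel_add hT hinf (k * d)
      rw [hkn] at hk
      exact (rel_add_mul_iff hT (k * d) x y).1 (T.trans' (T.symm' hxk) hk)
  rcases hcase with hinf | habs
  · obtain ⟨l, hl⟩ := (wrap_rel hTn).1 hinf
    refine Or.inr (hnc.rel_add_of_abs_le hT hm ?_ hl)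
    have hlen : x - (x + m + l * n) = -((1 + l * d) * m) := by rw [hkn]; ring
    have hne : 1 + l * (d : ℤ) ≠ 0 := fun h0 => by
      have hunit : IsUnit (d : ℤ) := IsUnit.of_mul_eq_one (-l) (by linarith)
      rw [Int.isUnit_iff] at hunit
      omega
    rw [hlen, abs_neg, abs_mul, Nat.abs_cast]
    exact le_mul_of_one_le_left (Nat.cast_nonneg m) (Int.one_le_abs hne)
  · refine or_iff_not_imp_left.2 fun hk0 => hnc.rel_add_of_abs_le hT hm ?_ hk
    have h2m : 2 * (m : ℤ) ≤ n := by rw [hn]; push_cast; nlinarith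
    rw [abs_lt] at habs
    rcases lt_or_gt_of_ne hk0 with hneg | hpos
    · exact le_abs.2 (Or.inl (by nlinarith))
    · exact le_abs.2 (Or.inr (by nlinarith))

lemma IsCyclicNoncrossing.rel_add_of_mem_Icc (hs : IsCyclicNoncrossing n s)
    (hsm : s.comap (· + (m : ℤ)) = s) (hm : 0 < m) (hmxy : m ≤ y - x) (hxy : y - x ≤ n - m)
    (h : s x y) : s x (x + m) := by
  have hshift (u v : ℤ) : s (u + m) (v + m) ↔ s u v := by simpa using rel_add_mul_iff hsm 1 u v
  rcases eq_or_lt_of_le hmxy with heq | hlt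
  · rwa [show x + m = y by omega]
  rcases eq_or_lt_of_le hxy with heq | hgt
  · have hym : s x (y - n) := s.trans' h (by simpa [sub_eq_add_neg] using hs.rel_add_mul (-1) y)
    have := (hshift _ _).2 hym
    rw [show y - n + m = x by omega] at this
    exact s.symm' this
  · exact hs.2 (by omega) (by omega) (by omega) (by omega) h ((hshift x y).2 h)

lemma rel_add_congr (hsm : s.comap (· + (m : ℤ)) = s) (h : s x y) :
    s x (x + m) ↔ s y (y + m) := by
  have hshift : s (x + m) (y + m) := by simpa using (rel_add_mul_iff hsm 1 x y).2 h
  exact ⟨fun hx => s.trans' (s.symm' h) (s.trans' hx hshift),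
    fun hy => s.trans' h (s.trans' hy (s.symm' hshift))⟩

lemma IsCyclicNoncrossing.rel_of_rel_add (hs : IsCyclicNoncrossing n s)
    (hsm : s.comap (· + (m : ℤ)) = s) (hm : 0 < m) (hn : 2 * m ≤ n) (hx : s x (x + m))
    (hy : s y (y + m)) : s x y := by
  obtain ⟨l, hxz, hzx⟩ := exists_add_mul_mem_Ico hm x y
  have hyz := rel_add_mul_of_rel_add hsm hy l
  rcases eq_or_lt_of_le hxz with heq | hlt
  · exact heq ▸ s.symm' hyz
  · exact s.trans' (hs.2 hlt hzx (by omega) (by omega) hx ((rel_add_congr hsm hyz).1 hy))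
      (s.symm' hyz)

lemma IsCyclicNoncrossing.equivalence_isUnwrapRel (hs : IsCyclicNoncrossing n s)
    (hsm : s.comap (· + (m : ℤ)) = s) (hm : 0 < m) (hn : 3 * m ≤ n) :
    Equivalence (IsUnwrapRel m s) := by
  refine ⟨fun x => ⟨s.refl' x, Or.inr (by simpa)⟩, fun {x y} ⟨hxy, h⟩ => ⟨s.symm' hxy, ?_⟩,
    fun {x y z} ⟨hxy, h⟩ ⟨hyz, h'⟩ => ⟨s.trans' hxy hyz, ?_⟩⟩
  · rwa [← rel_add_congr hsm hxy, abs_sub_comm]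
  rw [← rel_add_congr hsm hxy] at h'
  by_contra! hcon
  have hxy' := abs_lt.1 (h.resolve_left hcon.1)
  have hyz' := abs_lt.1 (h'.resolve_left hcon.1)
  have hxz := s.trans' hxy hyz
  rcases le_abs.1 hcon.2 with hle | hle
  · exact hcon.1 ((rel_add_congr hsm hxz).2
      (hs.rel_add_of_mem_Icc hsm hm hle (by omega) (s.symm' hxz)))
  · exact hcon.1 (hs.rel_add_of_mem_Icc hsm hm (by omega) (by omega) hxz)

lemma IsCyclicNoncrossing.isUnwrapRel_of_crossing (hs : IsCyclicNoncrossing n s)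
    (hsm : s.comap (· + (m : ℤ)) = s) (hm : 0 < m) (hn : 2 * m ≤ n) {a b c d : ℤ} (hab : a < b)
    (hbc : b < c) (hcd : c < d) (hac : IsUnwrapRel m s a c) (hbd : IsUnwrapRel m s b d) :
    IsUnwrapRel m s a b := by
  by_cases ha : s a (a + m) <;> by_cases hb : s b (b + m)
  · exact ⟨hs.rel_of_rel_add hsm hm hn ha hb, Or.inl ha⟩
  · have hbd' := abs_lt.1 (hbd.2.resolve_left hb)
    have hcm : s (c - m) (c - m + m) := by
      have hc := (rel_add_congr hsm hac.1).1 ha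
      simpa [sub_eq_add_neg] using (rel_add_mul_iff hsm (-1) _ _).2 hc
    have hcb : s (c - m) b := hs.2 (by omega) hbc hcd (by omega) (by simpa using hcm) hbd.1
    exact absurd ((rel_add_congr hsm hcb).1 hcm) hb
  · have hac' := abs_lt.1 (hac.2.resolve_left ha)
    have hab' := hs.2 hab hbc (d := b + m) (by omega) (by omega) hac.1 hb
    exact absurd ((rel_add_congr hsm hab').2 hb) ha
  · have hac' := abs_lt.1 (hac.2.resolve_left ha)
    have hbd' := abs_lt.1 (hbd.2.resolve_left hb)
    exact ⟨hs.2 hab hbc hcd (by omega) hac.1 hbd.1, Or.inr (abs_lt.2 ⟨by omega, by omega⟩)⟩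

theorem bijOn_wrap (hm : 0 < m) {d : ℕ} (hd : 3 ≤ d) (hn : n = d * m) :
    Set.BijOn (wrap n) (periodicNoncrossing m)
      {s | IsCyclicNoncrossing n s ∧ s.comap (· + (m : ℤ)) = s} := by
  have h3m : 3 * m ≤ n := hn ▸ Nat.mul_le_mul_right m hd
  have hperiod {T : Setoid ℤ} (hT : T ∈ periodicNoncrossing m) : T.comap (· + (n : ℤ)) = T := by
    simpa only [hn, Nat.cast_mul] using comap_add_mul_eq hT.2 d
  refine ⟨fun T hT => ⟨hT.1.isCyclicNoncrossing_wrap (hperiod hT) (by omega),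
    comap_wrap_eq (hperiod hT) hT.2⟩, fun T hT T' hT' heq => ?_, fun s ⟨hs, hsm⟩ => ?_⟩
  · ext x y
    rw [hT.1.rel_iff_isUnwrapRel_wrap hT.2 hm (by omega) hn,
      hT'.1.rel_iff_isUnwrapRel_wrap hT'.2 hm (by omega) hn, heq]
  have hshift (u v : ℤ) : s (u + m) (v + m) ↔ s u v := by simpa using rel_add_mul_iff hsm 1 u v
  let T : Setoid ℤ := ⟨IsUnwrapRel m s, hs.equivalence_isUnwrapRel hsm hm h3m⟩
  have hT : T ∈ periodicNoncrossing m := by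
    refine ⟨fun a b c d hab hbc hcd => hs.isUnwrapRel_of_crossing hsm hm (by omega) hab hbc hcd,
      Setoid.ext fun x y => ?_⟩
    change IsUnwrapRel m s (x + m) (y + m) ↔ IsUnwrapRel m s x y
    rw [IsUnwrapRel, IsUnwrapRel, hshift, hshift, add_sub_add_right_eq_sub]
  refine ⟨T, hT, Setoid.ext fun x y => ?_⟩
  rw [wrap_rel (hperiod hT)]
  refine ⟨fun ⟨k, hk⟩ => s.trans' hk.1 (s.symm' (hs.rel_add_mul k y)), fun hxy => ?_⟩
  obtain ⟨l, hxz, hzx⟩ := exists_add_mul_mem_Ico (by omega : 0 < n) x y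
  have hrel (l : ℤ) : s x (y + l * n) := s.trans' hxy (hs.rel_add_mul l y)
  by_cases hnear : y + l * n - x < m
  · exact ⟨l, hrel l, Or.inr (abs_lt.2 ⟨by omega, by omega⟩)⟩
  by_cases hfar : y + l * n - x ≤ n - m
  · exact ⟨l, hrel l, Or.inl (hs.rel_add_of_mem_Icc hsm hm (by omega) hfar (hrel l))⟩
  · refine ⟨l - 1, hrel (l - 1), Or.inr ?_⟩
    rw [sub_mul, one_mul]
    exact abs_lt.2 ⟨by omega, by omega⟩

end Unwrap

section Quotient

variable {T s : Setoid ℤ} {m n d : ℕ} {x y : ℤ}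

lemma card_quotient_eq_card_of_transversal {α : Type*} {s : Setoid α} {R : Finset α}
    (hex : ∀ x, ∃ a ∈ R, s a x) (hinj : ∀ a ∈ R, ∀ b ∈ R, s a b → a = b) :
    Nat.card (Quotient s) = #R := by
  rw [← Nat.card_eq_of_bijective (fun a : R => (⟦(a : α)⟧ : Quotient s)) ⟨fun a b hab => ?_,
    fun q => ?_⟩, Nat.card_eq_fintype_card, Fintype.card_coe]
  · exact Subtype.ext (hinj a a.2 b b.2 (Quotient.exact hab))
  · induction q using Quotient.inductionOn with
    | _ x =>
      obtain ⟨a, ha, hax⟩ := hex x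
      exact ⟨⟨a, ha⟩, Quotient.sound hax⟩

open Classical in
lemma card_isOpener_Ico_mul (hT : T.comap (· + (m : ℤ)) = T) (hm : 0 < m) :
    #{x ∈ Ico (1 : ℤ) (d * m + 1) | IsOpener T x} = d * #(wordOfRel m T).1 := by
  have hm0 : (0 : ℤ) < m := by omega
  have hdecomp (x : ℤ) : (x - 1) % m + 1 + (x - 1) / m * m = x := by
    linarith [Int.emod_add_ediv_mul (x - 1) m]
  have hcard : #((wordOfRel m T).1 ×ˢ Ico (0 : ℤ) d) = d * #(wordOfRel m T).1 := by
    rw [card_product, Int.card_Ico, sub_zero, Int.toNat_natCast, mul_comm]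
  rw [← hcard]
  refine card_nbij' (fun x => ((x - 1) % m, (x - 1) / m)) (fun p => p.1 + 1 + p.2 * m)
    (fun x hx => ?_) (fun p hp => ?_) (fun x _ => hdecomp x) (fun p hp => ?_)
  · obtain ⟨hx, hop⟩ := mem_filter.1 hx
    rw [mem_Ico] at hx
    rw [← hdecomp x, isOpener_add_mul_iff hT] at hop
    refine mem_product.2 ⟨mem_fst_wordOfRel.2 ⟨emod_mem_Ico hm0 _, hop⟩, mem_Ico.2 ⟨?_, ?_⟩⟩
    · exact Int.ediv_nonneg (by omega) hm0.le
    · exact Int.ediv_lt_of_lt_mul hm0 (by omega)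
  · obtain ⟨h1, h2⟩ := mem_product.1 hp
    obtain ⟨h1, hop⟩ := mem_fst_wordOfRel.1 h1
    rw [mem_Ico] at h1 h2
    refine mem_filter.2 ⟨mem_Ico.2 ⟨?_, ?_⟩, ?_⟩
    · change 1 ≤ p.1 + 1 + p.2 * m
      nlinarith
    · change p.1 + 1 + p.2 * m < d * m + 1
      nlinarith
    exact (isOpener_add_mul_iff hT p.2 _).2 hop
  · obtain ⟨h1, -⟩ := mem_product.1 hp
    have h1 := mem_Ico.1 (mem_fst_wordOfRel.1 h1).1
    change ((p.1 + 1 + p.2 * m - 1) % m, (p.1 + 1 + p.2 * m - 1) / m) = p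
    rw [add_right_comm, add_sub_cancel_right]
    exact Prod.ext (by simp [Int.emod_eq_of_lt h1.1 h1.2])
      (by simp [Int.add_mul_ediv_right _ _ hm0.ne', Int.ediv_eq_zero_of_lt h1.1 h1.2])

lemma IsOpener.eq_of_rel (hx : IsOpener T x) (hy : IsOpener T y) (h : T x y) : x = y :=
  le_antisymm (not_lt.1 fun hlt => hx y hlt (T.symm' h)) (not_lt.1 fun hlt => hy x hlt h)

lemma IsOpener.not_rel_add_of_rel (hx : IsOpener T x) (hT : T.comap (· + (m : ℤ)) = T)
    (hm : 0 < m) (hxy : T x y) : ¬ T y (y + m) := fun hy =>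
  hx (x + -1 * m) (by omega) (T.symm'
    (rel_add_mul_of_rel_add hT ((rel_add_congr hT hxy).2 hy) (-1)))

lemma exists_isOpener_rel_or_rel_add (hT : T ∈ periodicNoncrossing m) (hm : 0 < m) (x : ℤ) :
    (∃ y, IsOpener T y ∧ T y x) ∨ T x (x + m) := by
  by_cases hlong : ∃ y ≤ x - m, T x y
  · obtain ⟨y, hyx, hxy⟩ := hlong
    exact Or.inr (hT.1.rel_add_of_abs_le hT.2 hm (le_abs.2 (Or.inl (by omega))) hxy)
  · push Not at hlong
    obtain ⟨y, hyx, hmin⟩ := Int.exists_least_of_bdd (P := fun y => T y x)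
      ⟨x - m, fun z hz => not_lt.1 fun hlt => hlong z hlt.le (T.symm' hz)⟩ ⟨x, T.refl' x⟩
    exact Or.inl ⟨y, fun z hzy hz => (hmin z (T.trans' hz hyx)).not_gt hzy, hyx⟩

lemma IsNoncrossingSetoid.rel_of_rel_add (hnc : IsNoncrossingSetoid T)
    (hT : T.comap (· + (m : ℤ)) = T) (hm : 0 < m) (hx : T x (x + m)) (hy : T y (y + m)) :
    T x y := by
  obtain ⟨l, hxz, hzx⟩ := exists_add_mul_mem_Ico hm x y
  have hyz := rel_add_mul_of_rel_add hT hy l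
  rcases eq_or_lt_of_le hxz with heq | hlt
  · exact heq ▸ T.symm' hyz
  · exact T.trans' (hnc hlt hzx (by omega) hx ((rel_add_congr hT hyz).1 hy)) (T.symm' hyz)

lemma IsOpener.eq_of_wrap (hT : T.comap (· + (n : ℤ)) = T) (hx : x ∈ Ico (1 : ℤ) (n + 1))
    (hy : y ∈ Ico (1 : ℤ) (n + 1)) (hxop : IsOpener T x) (hyop : IsOpener T y)
    (h : wrap n T x y) : x = y := by
  rw [mem_Ico] at hx hy
  obtain ⟨k, hk⟩ := (wrap_rel hT).1 h
  have heq := hxop.eq_of_rel ((isOpener_add_mul_iff hT k y).2 hyop) hk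
  have hpred : x - 1 = y - 1 := eq_of_add_mul_eq_add_mul (p := n) (k := 0) (l := k)
    (mem_Ico.2 ⟨by omega, by omega⟩) (mem_Ico.2 ⟨by omega, by omega⟩) (by linarith)
  omega

lemma exists_isOpener_wrap (hT : T ∈ periodicNoncrossing m) (hm : 0 < m)
    (hTn : T.comap (· + (n : ℤ)) = T) (hn : 0 < n) (hx : ¬ T x (x + m)) :
    ∃ a, (a ∈ Ico (1 : ℤ) (n + 1) ∧ IsOpener T a) ∧ wrap n T a x := by
  obtain ⟨y, hy, hyx⟩ := (exists_isOpener_rel_or_rel_add hT hm x).resolve_right hx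
  obtain ⟨k, hk⟩ := exists_add_mul_mem_Ico hn 1 y
  exact ⟨y + k * n, ⟨mem_Ico.2 ⟨hk.1, by linarith [hk.2]⟩, (isOpener_add_mul_iff hTn k y).2 hy⟩,
    (wrap_rel hTn).2 ⟨k, (rel_add_mul_iff hTn k y x).2 hyx⟩⟩

lemma IsOpener.not_wrap_of_rel_add (hx : IsOpener T x) (hT : T.comap (· + (m : ℤ)) = T)
    (hm : 0 < m) (hTn : T.comap (· + (n : ℤ)) = T) (hy : T y (y + m)) : ¬ wrap n T x y :=
  fun h => by
    obtain ⟨k, hk⟩ := (wrap_rel hTn).1 h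
    refine hx.not_rel_add_of_rel hT hm hk ?_
    rw [add_right_comm]
    exact (rel_add_mul_iff hTn k _ _).2 hy

open Classical in
/-- Wrapping gives `d` blocks for each finite class in a period, and merges the infinite class, if
there is one, to a single further block. -/
theorem card_quotient_wrap (hT : T ∈ periodicNoncrossing m) (hm : 0 < m) (hd : 0 < d)
    (hn : n = d * m) : Nat.card (Quotient (wrap n T)) =
      d * #(wordOfRel m T).1 + if ∃ x, T x (x + m) then 1 else 0 := by
  have hTn : T.comap (· + (n : ℤ)) = T := by
    simpa only [hn, Nat.cast_mul] using comap_add_mul_eq hT.2 d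
  have hn0 : 0 < n := hn ▸ Nat.mul_pos hd hm
  rw [← card_isOpener_Ico_mul hT.2 hm, ← Nat.cast_mul, ← hn]
  have hinj {a b : ℤ} (ha : a ∈ ({x ∈ Ico (1 : ℤ) (n + 1) | IsOpener T x} : Finset ℤ))
      (hb : b ∈ ({x ∈ Ico (1 : ℤ) (n + 1) | IsOpener T x} : Finset ℤ)) (hab : wrap n T a b) :
      a = b := by
    rw [mem_filter] at ha hb
    exact ha.2.eq_of_wrap hTn ha.1 hb.1 hb.2 hab
  split_ifs with hinf
  · obtain ⟨x₀, hx₀⟩ := hinf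
    have hopen {a : ℤ} (ha : a ∈ ({x ∈ Ico (1 : ℤ) (n + 1) | IsOpener T x} : Finset ℤ)) :
        ¬ wrap n T a x₀ := (mem_filter.1 ha).2.not_wrap_of_rel_add hT.2 hm hTn hx₀
    rw [← card_insert_of_notMem fun hx => hopen hx ((wrap n T).refl' x₀)]
    refine card_quotient_eq_card_of_transversal (fun x => ?_) ?_
    · by_cases hx : T x (x + m)
      · exact ⟨x₀, mem_insert_self _ _,
          wrap_rel_of_rel hTn (hT.1.rel_of_rel_add hT.2 hm hx₀ hx)⟩
      · obtain ⟨a, ha, hax⟩ := exists_isOpener_wrap hT hm hTn hn0 hx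
        exact ⟨a, mem_insert_of_mem (mem_filter.2 ha), hax⟩
    · simp only [mem_insert, forall_eq_or_imp]
      exact ⟨⟨fun _ => trivial, fun b hb h => absurd ((wrap n T).symm' h) (hopen hb)⟩,
        fun a ha => ⟨fun h => absurd h (hopen ha), fun b hb => hinj ha hb⟩⟩
  · refine card_quotient_eq_card_of_transversal (fun x => ?_) fun a ha b hb => hinj ha hb
    obtain ⟨a, ha, hax⟩ := exists_isOpener_wrap hT hm hTn hn0 fun hx => hinf ⟨x, hx⟩
    exact ⟨a, mem_filter.2 ha, hax⟩

end Quotient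

/-! ### Partitions of `ℤ/nℤ` as cyclic relations -/

/-- The restriction of `s` to the windows `[kn, (k + 1)n)` of `ℤ`. -/
def cut (n : ℕ) (s : Setoid ℤ) : Setoid ℤ := s ⊓ Setoid.ker fun x : ℤ => x / (n : ℤ)

/-- The `n`-periodic noncrossing relations on `ℤ` relating only points in a common window
`[kn, (k + 1)n)`. -/
def cutNoncrossing (n : ℕ) : Set (Setoid ℤ) :=
  {T | T ∈ periodicNoncrossing n ∧ ∀ x y, T x y → x / (n : ℤ) = y / n}

section Cut

variable {s T : Setoid ℤ} {n : ℕ} {x y : ℤ}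

lemma cut_rel : cut n s x y ↔ s x y ∧ x / (n : ℤ) = y / n := Iff.rfl

lemma comap_cut_eq (hs : s.comap (· + (n : ℤ)) = s) :
    (cut n s).comap (· + (n : ℤ)) = cut n s := by
  ext x y
  rw [Setoid.comap_rel, cut_rel, cut_rel, Int.add_ediv_of_dvd_right dvd_rfl,
    Int.add_ediv_of_dvd_right dvd_rfl, add_left_inj]
  exact and_congr_left' (by simpa using rel_add_mul_iff hs 1 x y)

lemma wrap_cut (hn : 0 < n) (hs : ∀ x, s x (x + n)) : wrap n (cut n s) = s := by
  have hsn : s.comap (· + (n : ℤ)) = s := comap_add_eq_of_forall_rel_add hs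
  ext x y
  rw [wrap_rel (comap_cut_eq hsn)]
  refine ⟨fun ⟨k, hk⟩ => s.trans' hk.1 (s.symm' (rel_add_mul_of_rel_add hsn (hs y) k)),
    fun h => ⟨x / n - y / n, s.trans' h (rel_add_mul_of_rel_add hsn (hs y) _), ?_⟩⟩
  change x / n = (y + (x / n - y / n) * n) / n
  rw [Int.add_mul_ediv_right _ _ (by omega)]
  ring

lemma cut_wrap (hn : 0 < n) (hT : T ∈ cutNoncrossing n) : cut n (wrap n T) = T := by
  ext x y
  rw [cut_rel, wrap_rel hT.1.2]
  refine ⟨fun ⟨⟨k, hk⟩, _⟩ => ?_, fun h => ⟨⟨0, by simpa using h⟩, hT.2 x y h⟩⟩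
  have hdiv := hT.2 _ _ hk
  rw [Int.add_mul_ediv_right _ _ (by omega)] at hdiv
  obtain rfl : k = 0 := by omega
  simpa using hk

lemma IsCyclicNoncrossing.cut_mem_cutNoncrossing (hn : 0 < n) (hs : IsCyclicNoncrossing n s) :
    cut n s ∈ cutNoncrossing n := by
  refine ⟨⟨fun a b c d hab hbc hcd hac hbd => ?_, comap_cut_eq hs.comap_add_eq⟩,
    fun x y h => h.2⟩
  have hac' : a / (n : ℤ) = c / n := hac.2
  have hbd' : b / (n : ℤ) = d / n := hbd.2
  have hn0 : (0 : ℤ) < n := by omega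
  have hab' := Int.ediv_le_ediv hn0 hab.le
  have hbc' := Int.ediv_le_ediv hn0 hbc.le
  have hda : d < a + n := by
    have := Int.lt_ediv_add_one_mul_self d hn0
    have := Int.ediv_mul_le a hn0.ne'
    rw [show d / (n : ℤ) = a / n by omega, add_one_mul] at *
    omega
  exact ⟨hs.2 hab hbc hcd hda hac.1 hbd.1, by change a / (n : ℤ) = b / n; omega⟩

theorem bijOn_wrap_cutNoncrossing (hn : 0 < n) :
    Set.BijOn (wrap n) (cutNoncrossing n) {s | IsCyclicNoncrossing n s} :=
  Set.InvOn.bijOn (f' := cut n) ⟨fun _ => cut_wrap hn, fun _ hs => wrap_cut hn hs.1⟩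
    (fun _ hT => hT.1.1.isCyclicNoncrossing_wrap hT.1.2 hn)
    fun _ hs => hs.cut_mem_cutNoncrossing hn

end Cut

/-- The equivalence relation on `ℤ` lifting a partition of `ℤ/nℤ`. -/
def partRel {n : ℕ} [NeZero n] (π : Finpartition (univ : Finset (ZMod n))) : Setoid ℤ :=
  Setoid.ker fun x : ℤ => π.part (x : ZMod n)

section PartRel

variable {n : ℕ} [NeZero n] {π : Finpartition (univ : Finset (ZMod n))} {x y : ℤ}

lemma partRel_rel : partRel π x y ↔ π.part (x : ZMod n) = π.part (y : ZMod n) := Iff.rfl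

lemma partRel_add_natCast (π : Finpartition (univ : Finset (ZMod n))) (x : ℤ) :
    partRel π x (x + n) := by
  rw [partRel_rel, Int.cast_add, Int.cast_natCast, CharP.cast_eq_zero, add_zero]

lemma isNoncrossing_iff_isNoncrossingSetoid_cut :
    IsNoncrossing π ↔ IsNoncrossingSetoid (cut n (partRel π)) := by
  have hn0 : (0 : ℤ) < n := Int.natCast_pos.2 (NeZero.pos n)
  constructor
  · intro h a b c d hab hbc hcd ⟨hac, hac'⟩ ⟨hbd, hbd'⟩
    simp only [Setoid.ker_def] at hac' hbd'
    have hdiv : a / (n : ℤ) = b / n :=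
      le_antisymm (Int.ediv_le_ediv hn0 hab.le) (hac' ▸ Int.ediv_le_ediv hn0 hbc.le)
    have hval {x y : ℤ} (hxy : x < y) (hdiv : x / (n : ℤ) = y / n) :
        (x : ZMod n).val < (y : ZMod n).val := by
      zify
      rw [ZMod.val_intCast, ZMod.val_intCast, Int.emod_def, Int.emod_def, hdiv]
      omega
    refine ⟨by_contra fun hne => h ⟨a, b, c, d, π.part a, π.part b, π.part_mem.2 (mem_univ _),
      π.part_mem.2 (mem_univ _), hne, π.mem_part_self.2 (mem_univ _), ?_,
      π.mem_part_self.2 (mem_univ _), ?_, hval hab hdiv, hval hbc (hdiv ▸ hac'),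
      hval hcd (hac' ▸ hdiv ▸ hbd')⟩, hdiv⟩
    · exact (partRel_rel.1 hac) ▸ π.mem_part_self.2 (mem_univ _)
    · exact (partRel_rel.1 hbd) ▸ π.mem_part_self.2 (mem_univ _)
  · rintro h ⟨a, b, c, d, B₁, B₂, hB₁, hB₂, hne, ha, hc, hb, hd, hab, hbc, hcd⟩
    have hcut {x y : ZMod n} {B : Finset (ZMod n)} (hB : B ∈ π.parts) (hx : x ∈ B) (hy : y ∈ B) :
        cut n (partRel π) x.val y.val := by
      have hdiv (z : ZMod n) : (z.val : ℤ) / n = 0 :=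
        Int.ediv_eq_zero_of_lt (by positivity) (Int.ofNat_lt.2 z.val_lt)
      refine cut_rel.2 ⟨?_, (hdiv x).trans (hdiv y).symm⟩
      rw [partRel_rel, Int.cast_natCast, Int.cast_natCast, ZMod.natCast_zmod_val,
        ZMod.natCast_zmod_val, π.part_eq_of_mem hB hx, π.part_eq_of_mem hB hy]
    have hab' := (h (Int.ofNat_lt.2 hab) (Int.ofNat_lt.2 hbc) (Int.ofNat_lt.2 hcd)
      (hcut hB₁ ha hc) (hcut hB₂ hb hd)).1
    rw [partRel_rel, Int.cast_natCast, Int.cast_natCast, ZMod.natCast_zmod_val,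
      ZMod.natCast_zmod_val, π.part_eq_of_mem hB₁ ha, π.part_eq_of_mem hB₂ hb] at hab'
    exact hne hab'

lemma isNoncrossing_iff_isCyclicNoncrossing_partRel :
    IsNoncrossing π ↔ IsCyclicNoncrossing n (partRel π) := by
  have hn := NeZero.pos n
  rw [isNoncrossing_iff_isNoncrossingSetoid_cut]
  refine ⟨fun h => ?_, fun h => (h.cut_mem_cutNoncrossing hn).1.1⟩
  rw [← wrap_cut hn (partRel_add_natCast π)]
  exact h.isCyclicNoncrossing_wrap
    (comap_cut_eq (comap_add_eq_of_forall_rel_add (partRel_add_natCast π))) hn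

lemma exists_intCast_part_eq {B : Finset (ZMod n)} (hB : B ∈ π.parts) :
    ∃ x : ℤ, π.part (x : ZMod n) = B := by
  obtain ⟨b, hb⟩ := π.nonempty_of_mem_parts hB
  obtain ⟨x, rfl⟩ := ZMod.intCast_surjective b
  exact ⟨x, π.part_eq_of_mem hB hb⟩

lemma image_image_parts_eq_iff (g : ZMod n ≃ ZMod n) {f : ℤ → ℤ}
    (hfg : ∀ x : ℤ, ((f x : ℤ) : ZMod n) = g x) :
    π.parts.image (Finset.image g) = π.parts ↔ (partRel π).comap f = partRel π := by
  have hmem (x y : ZMod n) : y ∈ π.part x ↔ π.part y = π.part x :=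
    π.mem_part_iff_part_eq_part (mem_univ _) (mem_univ _)
  trans ∀ x : ℤ, (π.part x).image g = π.part (g x)
  · refine ⟨fun h x => ?_, fun h => eq_of_subset_of_card_le (fun B hB => ?_) ?_⟩
    · have hx := h ▸ mem_image_of_mem (Finset.image g) (π.part_mem.2 (mem_univ (x : ZMod n)))
      exact (π.part_eq_of_mem hx
        (mem_image_of_mem g (π.mem_part_self.2 (mem_univ (x : ZMod n))))).symm
    · obtain ⟨_, hC, rfl⟩ := mem_image.1 hB
      obtain ⟨x, rfl⟩ := exists_intCast_part_eq hC
      exact h x ▸ π.part_mem.2 (mem_univ _)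
    · rw [card_image_of_injective _ (image_injective g.injective)]
  · have himage (x y : ZMod n) : g y ∈ (π.part x).image g ↔ π.part y = π.part x := by
      rw [g.injective.mem_finset_image, hmem]
    simp only [Setoid.ext_iff, Setoid.comap_rel, partRel_rel, hfg]
    refine ⟨fun h x y => ?_, fun h x => Finset.ext fun z => ?_⟩
    · rw [← hmem, ← h, himage]
    · obtain ⟨w, rfl⟩ := g.surjective z
      obtain ⟨y, rfl⟩ := ZMod.intCast_surjective w
      rw [himage, hmem, h]

lemma card_parts_eq_card_quotient : #π.parts = Nat.card (Quotient (partRel π)) := by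
  have hrange : Set.range (fun x : ℤ => π.part (x : ZMod n)) = π.parts := by
    ext B
    refine ⟨?_, fun hB => exists_intCast_part_eq hB⟩
    rintro ⟨x, rfl⟩
    exact π.part_mem.2 (mem_univ _)
  rw [partRel, Nat.card_congr (Setoid.quotientKerEquivRange _), hrange]
  exact (Nat.card_eq_finsetCard _).symm

theorem bijOn_partRel : Set.BijOn (partRel (n := n)) {π | IsNoncrossing π}
    {s | IsCyclicNoncrossing n s} := by
  classical
  refine ⟨fun π => isNoncrossing_iff_isCyclicNoncrossing_partRel.1, fun π _ π' _ h => ?_,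
    fun s hs => ?_⟩
  · have hpart (x : ℤ) : π.part (x : ZMod n) = π'.part (x : ZMod n) := by
      ext w
      obtain ⟨y, rfl⟩ := ZMod.intCast_surjective w
      rw [Finpartition.mem_part_iff_part_eq_part _ (mem_univ _) (mem_univ _),
        Finpartition.mem_part_iff_part_eq_part _ (mem_univ _) (mem_univ _)]
      exact Setoid.ext_iff.1 h y x
    ext B
    refine ⟨fun hB => ?_, fun hB => ?_⟩ <;> obtain ⟨x, rfl⟩ := exists_intCast_part_eq hB
    · exact hpart x ▸ π'.part_mem.2 (mem_univ _)
    · exact hpart x ▸ π.part_mem.2 (mem_univ _)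
  · let t : Setoid (ZMod n) := s.comap fun x => (x.val : ℤ)
    have hmod (x : ℤ) : s (x : ZMod n).val x := by
      rw [ZMod.val_intCast, ← Int.emod_add_ediv_mul x n]
      simpa using hs.rel_add_mul (x / n) (x % n)
    have hπ : partRel (Finpartition.ofSetoid t) = s := by
      ext x y
      rw [partRel_rel, ← Finpartition.mem_part_iff_part_eq_part _ (mem_univ _) (mem_univ _),
        Finpartition.mem_part_ofSetoid_iff_rel]
      exact ⟨fun h => s.trans' (s.symm' (hmod x)) (s.trans' (s.symm' h) (hmod y)),
        fun h => s.trans' (hmod y) (s.trans' (s.symm' h) (s.symm' (hmod x)))⟩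
    exact ⟨Finpartition.ofSetoid t, isNoncrossing_iff_isCyclicNoncrossing_partRel.2 (hπ ▸ hs), hπ⟩

end PartRel

/-! ### Cut relations and Dyck words -/

/-- The balanced gap words of length `N` with nonnegative heights, which encode the noncrossing
relations on a window of `N + 1` points. -/
noncomputable def dyckWords (N : ℕ) : Finset GapWord :=
  {w ∈ balancedWords N | ∀ i ∈ Icc (0 : ℤ) N, 0 ≤ height w i}

/-- The word `w` followed by a gap that closes and opens a class. -/
def closeWord (N : ℕ) (w : GapWord) : GapWord := (insert (N : ℤ) w.1, insert (N : ℤ) w.2)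

section DyckWord

variable {N : ℕ} {w : GapWord} {T : Setoid ℤ}

lemma mem_dyckWords :
    w ∈ dyckWords N ↔ w ∈ balancedWords N ∧ ∀ i ∈ Icc (0 : ℤ) N, 0 ≤ height w i := mem_filter

lemma height_closeWord {i : ℤ} (hi : i ≤ N) : height (closeWord N w) i = height w i := by
  simp only [height, closeWord, filter_insert, hi.not_gt, if_false]

lemma natCast_notMem_of_subset {A : Finset ℤ} (hA : A ⊆ Ico (0 : ℤ) N) : (N : ℤ) ∉ A :=
  fun h => (mem_Ico.1 (hA h)).2.false

lemma closeWord_mem_balancedWords (hw : w ∈ balancedWords N) :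
    closeWord N w ∈ balancedWords (N + 1) := by
  obtain ⟨hsub, hcard⟩ := mem_balancedWords.1 hw
  rw [mem_gapWords] at hsub
  have hinsert {A : Finset ℤ} (hA : A ⊆ Ico (0 : ℤ) N) :
      insert (N : ℤ) A ⊆ Ico (0 : ℤ) (N + 1 : ℕ) := by
    refine insert_subset (mem_Ico.2 ?_) (hA.trans (Ico_subset_Ico_right ?_)) <;> grind
  refine mem_balancedWords.2 ⟨mem_gapWords.2 ⟨hinsert hsub.1, hinsert hsub.2⟩, ?_⟩
  rw [closeWord, card_insert_of_notMem (natCast_notMem_of_subset hsub.1),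
    card_insert_of_notMem (natCast_notMem_of_subset hsub.2), hcard]

lemma injOn_closeWord : Set.InjOn (closeWord N) (gapWords N) := by
  intro w hw w' hw' h
  rw [mem_coe, mem_gapWords] at hw hw'
  have herase {A B : Finset ℤ} (hA : A ⊆ Ico (0 : ℤ) N) (hB : B ⊆ Ico (0 : ℤ) N)
      (h : insert (N : ℤ) A = insert (N : ℤ) B) : A = B := by
    rw [← erase_insert (natCast_notMem_of_subset hA), h,
      erase_insert (natCast_notMem_of_subset hB)]
  exact Prod.ext (herase hw.1 hw'.1 (congrArg Prod.fst h)) (herase hw.2 hw'.2 (congrArg Prod.snd h))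

lemma relOfWord_closeWord_mem_cutNoncrossing (hw : w ∈ dyckWords N) :
    relOfWord (N + 1) (closeWord N w) ∈ cutNoncrossing (N + 1) := by
  obtain ⟨hbal, hheight⟩ := mem_dyckWords.1 hw
  obtain ⟨hgap, hcard⟩ := mem_balancedWords.1 hbal
  refine ⟨relOfWord_mem_periodicNoncrossing _ _, ?_⟩
  have hlt {x y : ℤ} (hxy : x ≤ y) (h : relOfWord (N + 1) (closeWord N w) x y) :
      ¬ x / ((N + 1 : ℕ) : ℤ) < y / ((N + 1 : ℕ) : ℤ) := by
    intro hdiv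
    rw [relOfWord, levelSetoid_rel_of_le hxy] at h
    have hx := mem_Ico.1 (emod_mem_Ico (p := ((N + 1 : ℕ) : ℤ)) (by positivity) x)
    have hxN := Int.le_of_lt_add_one (hx.2.trans_eq (Nat.cast_succ N))
    have hx' := Int.emod_add_ediv_mul x ((N + 1 : ℕ) : ℤ)
    have hy' := (Int.le_ediv_iff_mul_le (by positivity)).1 hdiv
    rw [add_one_mul] at hy'
    have hcross := h.2 (N + x / ((N + 1 : ℕ) : ℤ) * ((N + 1 : ℕ) : ℤ))
      ⟨by push_cast at hx hx' ⊢; omega, by push_cast at hx hy' ⊢; omega⟩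
    rw [Int.add_mul_emod_self_right, Int.emod_eq_of_lt (a := (N : ℤ)) (by positivity) (by simp),
      gapHeight, if_pos (show (N : ℤ) ∈ (closeWord N w).2 from mem_insert_self _ _),
      height_closeWord le_rfl, height_length hgap, hcard,
      height_closeWord hxN] at hcross
    have := hheight (x % ((N + 1 : ℕ) : ℤ)) (mem_Icc.2 ⟨hx.1, hxN⟩)
    linarith
  intro x y h
  rcases le_total x y with hxy | hyx
  · exact le_antisymm (Int.ediv_le_ediv (by positivity) hxy) (not_lt.1 (hlt hxy h))
  · exact le_antisymm (not_lt.1 (hlt hyx (Setoid.symm' _ h)))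
      (Int.ediv_le_ediv (by positivity) hyx)

lemma closeWord_wordOfRel (hT : T ∈ cutNoncrossing (N + 1)) :
    closeWord N (wordOfRel N T) = wordOfRel (N + 1) T := by
  have hop : IsOpener T (N + 1) := fun y hy h => by
    have := hT.2 _ _ h
    rw [Nat.cast_add_one, Int.ediv_self (by omega)] at this
    have := Int.ediv_mul_le y (b := N + 1) (by omega)
    grind
  have hcl : IsCloser T N := fun y hy h => by
    have := hT.2 _ _ h
    rw [Nat.cast_add_one, Int.ediv_eq_zero_of_lt (by omega) (by omega)] at this
    have := Int.lt_ediv_add_one_mul_self y (b := N + 1) (by omega)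
    grind
  ext i <;> simp only [closeWord, mem_insert, mem_fst_wordOfRel, mem_snd_wordOfRel, mem_Ico,
    Nat.cast_add_one] <;> grind

lemma wordOfRel_mem_balancedWords_of_mem_cutNoncrossing (hT : T ∈ cutNoncrossing (N + 1)) :
    wordOfRel N T ∈ balancedWords N := by
  have hsub : wordOfRel N T ∈ gapWords N := mem_gapWords.2
    ⟨fun _ hi => (mem_fst_wordOfRel.1 hi).1, fun _ hi => (mem_snd_wordOfRel.1 hi).1⟩
  have hcard := (mem_balancedWords.1 (wordOfRel_mem_balancedWords N.succ_pos hT.1)).2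
  rw [mem_gapWords] at hsub
  rw [← closeWord_wordOfRel hT, closeWord,
    card_insert_of_notMem (natCast_notMem_of_subset hsub.1),
    card_insert_of_notMem (natCast_notMem_of_subset hsub.2)] at hcard
  exact mem_balancedWords.2 ⟨mem_gapWords.2 hsub, by omega⟩

/- Downwards induction on `i`: if `i` is a closer, the height does not increase from `i` to `i + 1`;
otherwise `i` is related to some `j > i` in the window, which has the same height. -/
lemma height_wordOfRel_nonneg (hT : T ∈ cutNoncrossing (N + 1)) {i : ℤ} (hi : i ∈ Icc (0 : ℤ) N) :
    0 ≤ height (wordOfRel N T) i := by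
  induction hk : (N - i).toNat using Nat.strong_induction_on generalizing i with
  | _ k ih =>
  subst hk
  obtain ⟨hgap, hcard⟩ := mem_balancedWords.1 (wordOfRel_mem_balancedWords_of_mem_cutNoncrossing hT)
  rw [mem_Icc] at hi
  rcases hi.2.eq_or_lt with rfl | hiN
  · rw [height_length hgap, hcard, sub_self]
  by_cases hcl : IsCloser T i
  · have hmem : i ∈ (wordOfRel N T).2 := mem_snd_wordOfRel.2 ⟨mem_Ico.2 ⟨hi.1, hiN⟩, hcl⟩
    have hnext := ih _ (by omega) (mem_Icc.2 ⟨by omega, Int.add_one_le_of_lt hiN⟩) rfl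
    rw [height_add_one, gapHeight, if_pos hmem] at hnext
    split_ifs at hnext <;> omega
  · simp only [IsCloser, not_forall, not_not] at hcl
    obtain ⟨j, hij, hrel⟩ := hcl
    have hjN := hT.2 _ _ hrel
    rw [Int.ediv_eq_zero_of_lt hi.1 (by omega)] at hjN
    have hjN' := Int.lt_ediv_add_one_mul_self j (b := (N + 1 : ℕ)) (by positivity)
    rw [← hjN, zero_add, one_mul, Nat.cast_add_one, Int.lt_add_one_iff] at hjN'
    rw [← relOfWord_wordOfRel N.succ_pos hT.1, ← closeWord_wordOfRel hT, relOfWord,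
      levelSetoid_rel_of_le hij.le, Int.emod_eq_of_lt hi.1 (by omega),
      Int.emod_eq_of_lt (by omega) (by omega), height_closeWord hi.2, height_closeWord hjN'] at hrel
    exact hrel.1 ▸ ih _ (by omega) (mem_Icc.2 ⟨by omega, hjN'⟩) rfl

lemma wordOfRel_mem_dyckWords (hT : T ∈ cutNoncrossing (N + 1)) :
    wordOfRel N T ∈ dyckWords N :=
  mem_dyckWords.2 ⟨wordOfRel_mem_balancedWords_of_mem_cutNoncrossing hT,
    fun _ => height_wordOfRel_nonneg hT⟩

theorem bijOn_wordOfRel_cutNoncrossing (N : ℕ) :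
    Set.BijOn (wordOfRel N) (cutNoncrossing (N + 1)) (dyckWords N) := by
  refine Set.InvOn.bijOn (f' := fun w => relOfWord (N + 1) (closeWord N w))
    ⟨fun T hT => ?_, fun w hw => ?_⟩ (fun _ => wordOfRel_mem_dyckWords)
    fun _ => relOfWord_closeWord_mem_cutNoncrossing
  · simp only [closeWord_wordOfRel hT, relOfWord_wordOfRel N.succ_pos hT.1]
  · have hT := relOfWord_closeWord_mem_cutNoncrossing hw
    have hw' := (mem_dyckWords.1 hw).1
    refine injOn_closeWord (mem_balancedWords.1 (mem_dyckWords.1 (wordOfRel_mem_dyckWords hT)).1).1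
      (mem_balancedWords.1 hw').1 ?_
    rw [closeWord_wordOfRel hT, wordOfRel_relOfWord N.succ_pos (closeWord_mem_balancedWords hw')]

lemma card_quotient_wrap_of_mem_cutNoncrossing (hT : T ∈ cutNoncrossing (N + 1)) :
    Nat.card (Quotient (wrap (N + 1) T)) = #(wordOfRel N T).1 + 1 := by
  classical
  have hopen : ¬ ∃ x, T x (x + (N + 1 : ℕ)) := fun ⟨x, hx⟩ => by
    have := hT.2 _ _ hx
    rw [Int.add_ediv_of_dvd_right dvd_rfl, Int.ediv_self (by positivity)] at this
    omega
  have hsub := mem_gapWords.1 (mem_balancedWords.1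
    (wordOfRel_mem_balancedWords_of_mem_cutNoncrossing hT)).1
  rw [card_quotient_wrap hT.1 N.succ_pos one_pos (one_mul _).symm, if_neg hopen,
    ← closeWord_wordOfRel hT, closeWord, card_insert_of_notMem (natCast_notMem_of_subset hsub.1),
    one_mul, add_zero]

end DyckWord

/-! ### Fixed partitions as gap words -/

section Fixed

variable {n m d b : ℕ}

lemma ncard_sep_eq_of_bijOn {α β : Type*} {f : α → β} {A : Set α} {B : Set β} {p : α → Prop}
    {q : β → Prop} (h : Set.BijOn f A B) (hpq : ∀ a ∈ A, p a ↔ q (f a)) :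
    {a ∈ A | p a}.ncard = {b ∈ B | q b}.ncard := by
  refine Set.BijOn.ncard_eq (f := f) ⟨fun a ha => ⟨h.mapsTo ha.1, (hpq a ha.1).1 ha.2⟩,
    h.injOn.mono (Set.sep_subset _ _), fun b hb => ?_⟩
  obtain ⟨a, ha, rfl⟩ := h.surjOn hb.1
  exact ⟨a, ⟨ha, (hpq a ha).2 hb.2⟩, rfl⟩

/-- The relations on `ℤ` lifting the noncrossing partitions of `ℤ/nℤ` with `b` blocks. -/
def cyclicNoncrossing (n b : ℕ) : Set (Setoid ℤ) :=
  {s | IsCyclicNoncrossing n s ∧ Nat.card (Quotient s) = b}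

theorem card_isNoncrossing_image_eq [NeZero n] (g : ZMod n ≃ ZMod n) {f : ℤ → ℤ}
    (hfg : ∀ x : ℤ, ((f x : ℤ) : ZMod n) = g x) :
    Nat.card {π : Finpartition (univ : Finset (ZMod n)) // IsNoncrossing π ∧ #π.parts = b ∧
      π.parts.image (Finset.image g) = π.parts} =
      {s ∈ cyclicNoncrossing n b | s.comap f = s}.ncard := by
  simp only [cyclicNoncrossing, Set.mem_ofPred_eq, and_assoc]
  exact ncard_sep_eq_of_bijOn bijOn_partRel fun π _ => by
    rw [card_parts_eq_card_quotient, image_image_parts_eq_iff g hfg]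

lemma comap_add_eq_iff_comap_add_gcd_eq {s : Setoid ℤ} (hs : s.comap (· + (n : ℤ)) = s) (ℓ : ℤ) :
    s.comap (· + ℓ) = s ↔ s.comap (· + (ℓ.gcd n : ℤ)) = s := by
  constructor <;> intro h
  · rw [Int.gcd_eq_gcd_ab, mul_comm, mul_comm (n : ℤ)]
    refine Setoid.ext fun x y => ?_
    rw [Setoid.comap_rel, ← add_assoc, ← add_assoc, rel_add_mul_iff hs, rel_add_mul_iff h]
  · obtain ⟨k, hk⟩ := Int.gcd_dvd_left ℓ n
    conv_lhs => rw [hk, mul_comm]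
    exact comap_add_mul_eq h k

open Classical in
theorem ncard_cyclicNoncrossing_comap_add (hm : 0 < m) (hd : 3 ≤ d) (hn : n = d * m) :
    {s ∈ cyclicNoncrossing n b | s.comap (· + (m : ℤ)) = s}.ncard =
      #{w ∈ balancedWords m | (d * #w.1 + if HasOpenLevel m w then 1 else 0) = b} := by
  have hword : Set.BijOn (wordOfRel m) (periodicNoncrossing m) (balancedWords m) :=
    (invOn_relOfWord_wordOfRel hm).bijOn (fun _ => wordOfRel_mem_balancedWords hm)
      fun w _ => relOfWord_mem_periodicNoncrossing m w
  have hsep : {s ∈ cyclicNoncrossing n b | s.comap (· + (m : ℤ)) = s} =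
      {s ∈ {s | IsCyclicNoncrossing n s ∧ s.comap (· + (m : ℤ)) = s} |
        Nat.card (Quotient s) = b} := Set.ext fun _ => and_right_comm
  rw [hsep, ← Set.ncard_coe_finset, coe_filter]
  refine (ncard_sep_eq_of_bijOn (bijOn_wrap hm hd hn) fun _ _ => Iff.rfl).symm.trans
    (ncard_sep_eq_of_bijOn hword fun T hT => ?_)
  rw [card_quotient_wrap hT hm (by omega) hn, ← exists_relOfWord_add_iff hm,
    relOfWord_wordOfRel hm hT]

theorem ncard_cyclicNoncrossing (N b : ℕ) :
    (cyclicNoncrossing (N + 1) b).ncard = #{w ∈ dyckWords N | #w.1 + 1 = b} := by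
  rw [← Set.ncard_coe_finset, coe_filter]
  refine (ncard_sep_eq_of_bijOn (bijOn_wrap_cutNoncrossing N.succ_pos)
    fun _ _ => Iff.rfl).symm.trans (ncard_sep_eq_of_bijOn (bijOn_wordOfRel_cutNoncrossing N)
    fun T hT => ?_)
  rw [card_quotient_wrap_of_mem_cutNoncrossing hT]

end Fixed

/-! ### The reflection -/

section Reflection

variable {n N M b : ℕ} {s T : Setoid ℤ} {w : GapWord}

lemma IsCyclicNoncrossing.comap_add (hs : IsCyclicNoncrossing n s) (c : ℤ) :
    IsCyclicNoncrossing n (s.comap (· + c)) :=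
  ⟨fun x => by simpa only [Setoid.comap_rel, add_right_comm] using hs.1 (x + c),
    fun _ _ _ _ hab hbc hcd hda => hs.2 (add_lt_add_left hab c) (add_lt_add_left hbc c)
      (add_lt_add_left hcd c) (by linarith)⟩

lemma card_quotient_comap_add (s : Setoid ℤ) (c : ℤ) :
    Nat.card (Quotient (s.comap (· + c))) = Nat.card (Quotient s) :=
  Nat.card_congr (Quotient.congr (Equiv.addRight c) fun _ _ => Iff.rfl)

lemma ncard_cyclicNoncrossing_comap_neg (n b : ℕ) (c : ℤ) :
    {s ∈ cyclicNoncrossing n b | s.comap (- ·) = s}.ncard =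
      {s ∈ cyclicNoncrossing n b | s.comap (2 * c - ·) = s}.ncard := by
  have hcomap (s : Setoid ℤ) (c c' : ℤ) (h : c + c' = 0) :
      (s.comap (· + c)).comap (· + c') = s := by
    ext x y
    simp only [Setoid.comap_rel, add_assoc, add_comm c', h, add_zero]
  have hmaps (c : ℤ) : Set.MapsTo (fun s : Setoid ℤ => s.comap (· + c)) (cyclicNoncrossing n b)
      (cyclicNoncrossing n b) := fun s hs =>
    ⟨hs.1.comap_add c, (card_quotient_comap_add s c).trans hs.2⟩
  refine ncard_sep_eq_of_bijOn (Set.InvOn.bijOn (f' := fun s => s.comap (· + c))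
    ⟨fun s _ => hcomap s _ _ (neg_add_cancel c), fun s _ => hcomap s _ _ (add_neg_cancel c)⟩
    (hmaps _) (hmaps _)) fun s _ => ?_
  simp only [Setoid.ext_iff, Setoid.comap_rel]
  refine ⟨fun h x y => ?_, fun h x y => ?_⟩
  · rw [← h]
    ring_nf
  · have := h (x + c) (y + c)
    ring_nf at this ⊢
    exact this

lemma natCast_sub_ediv (N : ℕ) (x : ℤ) :
    (N - x) / ((N + 1 : ℕ) : ℤ) = -(x / ((N + 1 : ℕ) : ℤ)) := by
  have hpos : 0 < ((N + 1 : ℕ) : ℤ) := by positivity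
  have hlt := Int.emod_lt_of_pos x hpos
  have hnonneg := Int.emod_nonneg x hpos.ne'
  rw [show (N : ℤ) - x = N - x % (N + 1 : ℕ) + -(x / ((N + 1 : ℕ) : ℤ)) * (N + 1 : ℕ) by
      linarith [Int.emod_add_ediv_mul x (N + 1 : ℕ)],
    Int.add_mul_ediv_right _ _ hpos.ne', Int.ediv_eq_zero_of_lt _ _, zero_add]
  · rw [Nat.cast_succ] at hlt ⊢
    omega
  · rw [Nat.cast_succ] at hnonneg ⊢
    omega

lemma cut_comap_sub (s : Setoid ℤ) :
    cut (N + 1) (s.comap ((N : ℤ) - ·)) = (cut (N + 1) s).comap ((N : ℤ) - ·) := by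
  ext x y
  simp only [cut_rel, Setoid.comap_rel, natCast_sub_ediv, neg_inj]

lemma comap_sub_mem_cutNoncrossing (hT : T ∈ cutNoncrossing (N + 1)) :
    T.comap ((N : ℤ) - ·) ∈ cutNoncrossing (N + 1) := by
  refine ⟨⟨fun a b c d hab hbc hcd hac hbd => ?_, Setoid.ext fun x y => ?_⟩, fun x y h => ?_⟩
  · have hdc : T (N - d) (N - c) := hT.1.1 (sub_lt_sub_left hcd _) (sub_lt_sub_left hbc _)
      (sub_lt_sub_left hab _) (T.symm' hbd) (T.symm' hac)
    exact T.trans' hac (T.trans' (T.symm' hdc) (T.symm' hbd))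
  · simp only [Setoid.comap_rel]
    rw [← rel_add_mul_iff hT.1.2 1]
    ring_nf
  · have := hT.2 _ _ h
    rwa [natCast_sub_ediv, natCast_sub_ediv, neg_inj] at this

lemma comap_sub_wrap_eq_iff (hT : T ∈ cutNoncrossing (N + 1)) :
    (wrap (N + 1) T).comap ((N : ℤ) - ·) = wrap (N + 1) T ↔ T.comap ((N : ℤ) - ·) = T := by
  constructor <;> intro h
  · rw [← cut_wrap N.succ_pos hT, ← cut_comap_sub, h]
  · have hsub (x y k : ℤ) : T (N - x) (N - y + k * (N + 1 : ℕ)) ↔ T x (y + -k * (N + 1 : ℕ)) := by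
      conv_rhs => rw [← h, Setoid.comap_rel]
      ring_nf
    ext x y
    rw [Setoid.comap_rel, wrap_rel hT.1.2, wrap_rel hT.1.2]
    simp only [hsub]
    exact ((Equiv.neg ℤ).surjective.exists (p := fun k => T x (y + k * (N + 1 : ℕ)))).symm

lemma isOpener_comap_sub_iff {c x : ℤ} : IsOpener (T.comap (c - ·)) x ↔ IsCloser T (c - x) := by
  refine ⟨fun h y hy hxy => h (c - y) (by omega) ?_, fun h y hy hxy => h (c - y) (by omega) ?_⟩
  · simpa [Setoid.comap_rel] using T.symm' hxy
  · exact T.symm' hxy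

lemma isCloser_comap_sub_iff {c x : ℤ} : IsCloser (T.comap (c - ·)) x ↔ IsOpener T (c - x) := by
  refine ⟨fun h y hy hxy => h (c - y) (by omega) ?_, fun h y hy hxy => h (c - y) (by omega) ?_⟩
  · simpa [Setoid.comap_rel] using T.symm' hxy
  · exact T.symm' hxy

/-- The gap word of the mirror image of a relation under `x ↦ N - x`. -/
def mirrorWord (N : ℕ) (w : GapWord) : GapWord :=
  (w.2.image ((N : ℤ) - 1 - ·), w.1.image ((N : ℤ) - 1 - ·))

lemma mem_fst_mirrorWord {i : ℤ} : i ∈ (mirrorWord N w).1 ↔ N - 1 - i ∈ w.2 := by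
  simp only [mirrorWord, mem_image]
  grind

lemma mem_snd_mirrorWord {i : ℤ} : i ∈ (mirrorWord N w).2 ↔ N - 1 - i ∈ w.1 := by
  simp only [mirrorWord, mem_image]
  grind

lemma wordOfRel_comap_sub (N : ℕ) (T : Setoid ℤ) :
    wordOfRel N (T.comap ((N : ℤ) - ·)) = mirrorWord N (wordOfRel N T) := by
  ext i
  · rw [mem_fst_wordOfRel, mem_fst_mirrorWord, mem_snd_wordOfRel, isOpener_comap_sub_iff,
      sub_add_eq_sub_sub_swap]
    grind
  · rw [mem_snd_wordOfRel, mem_snd_mirrorWord, mem_fst_wordOfRel, isCloser_comap_sub_iff]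
    grind

lemma comap_sub_eq_iff_mirrorWord_eq (hT : T ∈ cutNoncrossing (N + 1)) :
    T.comap ((N : ℤ) - ·) = T ↔ mirrorWord N (wordOfRel N T) = wordOfRel N T := by
  rw [← wordOfRel_comap_sub]
  exact ((bijOn_wordOfRel_cutNoncrossing N).injOn.eq_iff (comap_sub_mem_cutNoncrossing hT)
    hT).symm

theorem ncard_cyclicNoncrossing_comap_sub (N b : ℕ) :
    {s ∈ cyclicNoncrossing (N + 1) b | s.comap ((N : ℤ) - ·) = s}.ncard =
      #{w ∈ dyckWords N | #w.1 + 1 = b ∧ mirrorWord N w = w} := by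
  rw [← Set.ncard_coe_finset, coe_filter]
  simp only [cyclicNoncrossing, Set.mem_ofPred_eq, and_assoc]
  refine (ncard_sep_eq_of_bijOn (bijOn_wrap_cutNoncrossing N.succ_pos)
    fun _ _ => Iff.rfl).symm.trans (ncard_sep_eq_of_bijOn (bijOn_wordOfRel_cutNoncrossing N)
    fun T hT => ?_)
  rw [card_quotient_wrap_of_mem_cutNoncrossing hT, comap_sub_wrap_eq_iff hT,
    comap_sub_eq_iff_mirrorWord_eq hT]

/-- The gap words of length `M` with nonnegative heights, which encode the left halves of the
mirror-symmetric Dyck words of length `2 * M`. -/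
noncomputable def dyckPrefixes (M : ℕ) : Finset GapWord :=
  {v ∈ gapWords M | ∀ i ∈ Icc (0 : ℤ) M, 0 ≤ height v i}

/-- The mirror-symmetric word of length `2 * M` with left half `v`. -/
def unfoldWord (M : ℕ) (v : GapWord) : GapWord :=
  (v.1 ∪ (mirrorWord (2 * M) v).1, v.2 ∪ (mirrorWord (2 * M) v).2)

lemma mem_fst_mirrorWord_two_mul {v : GapWord} (hv : v ∈ gapWords M) {i : ℤ}
    (hi : i ∈ (mirrorWord (2 * M) v).1) : i ∈ Ico (M : ℤ) (2 * M : ℕ) := by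
  have := (mem_gapWords.1 hv).2 (mem_fst_mirrorWord.1 hi)
  grind

lemma mem_snd_mirrorWord_two_mul {v : GapWord} (hv : v ∈ gapWords M) {i : ℤ}
    (hi : i ∈ (mirrorWord (2 * M) v).2) : i ∈ Ico (M : ℤ) (2 * M : ℕ) := by
  have := (mem_gapWords.1 hv).1 (mem_snd_mirrorWord.1 hi)
  grind

lemma unfoldWord_mem_gapWords {v : GapWord} (hv : v ∈ gapWords M) :
    unfoldWord M v ∈ gapWords (2 * M) := by
  have hsub := mem_gapWords.1 hv
  refine mem_gapWords.2 ⟨union_subset (fun i hi => ?_) fun i hi => ?_,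
    union_subset (fun i hi => ?_) fun i hi => ?_⟩
  · have := hsub.1 hi
    grind
  · have := mem_fst_mirrorWord_two_mul hv hi
    grind
  · have := hsub.2 hi
    grind
  · have := mem_snd_mirrorWord_two_mul hv hi
    grind

lemma mirrorWord_unfoldWord (M : ℕ) (v : GapWord) :
    mirrorWord (2 * M) (unfoldWord M v) = unfoldWord M v := by
  ext i <;> simp only [unfoldWord, mem_union, mem_fst_mirrorWord, mem_snd_mirrorWord,
    sub_sub_cancel] <;> exact or_comm

lemma bijOn_unfoldWord (M : ℕ) :
    Set.BijOn (unfoldWord M) (gapWords M)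
      {w | w ∈ gapWords (2 * M) ∧ mirrorWord (2 * M) w = w} := by
  refine Set.InvOn.bijOn (f' := fun w => (w.1 ∩ Ico (0 : ℤ) M, w.2 ∩ Ico (0 : ℤ) M))
    ⟨fun v hv => ?_, fun w hw => ?_⟩
    (fun v hv => ⟨unfoldWord_mem_gapWords hv, mirrorWord_unfoldWord M v⟩)
    fun w _ => mem_gapWords.2 ⟨inter_subset_right, inter_subset_right⟩
  · have hsub := mem_gapWords.1 hv
    ext i
    · have := @hsub.1 i
      have := @mem_fst_mirrorWord_two_mul M v hv i
      simp only [unfoldWord]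
      grind
    · have := @hsub.2 i
      have := @mem_snd_mirrorWord_two_mul M v hv i
      simp only [unfoldWord]
      grind
  · have hsub := mem_gapWords.1 hw.1
    ext i
    · have := @hsub.1 i
      have hmirror := mem_fst_mirrorWord (N := 2 * M) (w := w) (i := i)
      rw [hw.2] at hmirror
      simp only [unfoldWord, mem_union, mem_fst_mirrorWord]
      grind
    · have := @hsub.2 i
      have hmirror := mem_snd_mirrorWord (N := 2 * M) (w := w) (i := i)
      rw [hw.2] at hmirror
      simp only [unfoldWord, mem_union, mem_snd_mirrorWord]
      grind

lemma card_fst_unfoldWord {v : GapWord} (hv : v ∈ gapWords M) :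
    #(unfoldWord M v).1 = #v.1 + #v.2 := by
  have hdisj : Disjoint v.1 (mirrorWord (2 * M) v).1 := disjoint_left.2 fun i hi hi' =>
    (mem_Ico.1 (mem_fst_mirrorWord_two_mul hv hi')).1.not_gt
      (mem_Ico.1 ((mem_gapWords.1 hv).1 hi)).2
  rw [unfoldWord, card_union_of_disjoint hdisj, mirrorWord,
    card_image_of_injective _ sub_right_injective]

lemma height_unfoldWord {v : GapWord} (hv : v ∈ gapWords M) {i : ℤ} (hi : i ≤ M) :
    height (unfoldWord M v) i = height v i := by
  rw [height, height, unfoldWord, filter_union, filter_union,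
    filter_false_of_mem fun x hx =>
      (hi.trans (mem_Ico.1 (mem_fst_mirrorWord_two_mul hv hx)).1).not_gt,
    filter_false_of_mem fun x hx =>
      (hi.trans (mem_Ico.1 (mem_snd_mirrorWord_two_mul hv hx)).1).not_gt,
    union_empty, union_empty]

lemma card_fst_eq_card_snd_of_mirrorWord_eq (hw : mirrorWord N w = w) : #w.1 = #w.2 := by
  conv_lhs => rw [← hw]
  exact card_image_of_injective _ sub_right_injective

lemma height_sub_of_mirrorWord_eq (hw : mirrorWord N w = w) (i : ℤ) :
    height w (N - i) = height w i := by
  have hmirror (A : Finset ℤ) :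
      (#{x ∈ A.image ((N : ℤ) - 1 - ·) | x < N - i} : ℤ) = #A - #{x ∈ A | x < i} := by
    rw [filter_image, card_image_of_injective _ sub_right_injective,
      ← card_filter_add_card_filter_not (s := A) (· < i), Nat.cast_add, add_sub_cancel_left]
    congr 3
    grind
  conv_lhs => rw [← hw]
  rw [height, mirrorWord, hmirror, hmirror, height, card_fst_eq_card_snd_of_mirrorWord_eq hw]
  ring

theorem card_dyckWords_mirrorWord_eq (M b : ℕ) :
    #{w ∈ dyckWords (2 * M) | #w.1 + 1 = b ∧ mirrorWord (2 * M) w = w} =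
      #{v ∈ dyckPrefixes M | #v.1 + #v.2 + 1 = b} := by
  have hsep : {w | w ∈ dyckWords (2 * M) ∧ (#w.1 + 1 = b ∧ mirrorWord (2 * M) w = w)} =
      {w ∈ {w | w ∈ gapWords (2 * M) ∧ mirrorWord (2 * M) w = w} |
        (∀ i ∈ Icc (0 : ℤ) (2 * M : ℕ), 0 ≤ height w i) ∧ #w.1 + 1 = b} := by
    ext w
    have := @card_fst_eq_card_snd_of_mirrorWord_eq (2 * M) w
    simp only [Set.mem_ofPred_eq, mem_dyckWords, mem_balancedWords]
    tauto
  rw [dyckPrefixes, filter_filter, ← Set.ncard_coe_finset, ← Set.ncard_coe_finset, coe_filter,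
    coe_filter, hsep]
  refine (ncard_sep_eq_of_bijOn (bijOn_unfoldWord M) fun v hv => ?_).symm
  have hw := ((bijOn_unfoldWord M).mapsTo hv).2
  rw [card_fst_unfoldWord hv]
  refine and_congr_left' ⟨fun h i hi => ?_, fun h i hi => ?_⟩
  · rw [mem_Icc] at hi
    rcases le_total i M with hiM | hiM
    · exact height_unfoldWord hv hiM ▸ h i (mem_Icc.2 ⟨hi.1, hiM⟩)
    · rw [← height_sub_of_mirrorWord_eq hw, height_unfoldWord hv (by omega)]
      exact h _ (mem_Icc.2 (by omega))
  · rw [mem_Icc] at hi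
    exact height_unfoldWord hv hi.2 ▸ h i (mem_Icc.2 (by omega))

end Reflection

/-! ### Counting gap words -/

/-- The word obtained from a word `w` of length `m` by appending a gap, which carries an opener if
`l.1` and a closer if `l.2`. -/
def snocWord (m : ℕ) (w : GapWord) (l : Bool × Bool) : GapWord :=
  (if l.1 then insert (m : ℤ) w.1 else w.1, if l.2 then insert (m : ℤ) w.2 else w.2)

section SnocWord

variable {m : ℕ} {w : GapWord} {l : Bool × Bool}

lemma card_filter_gapWords_succ (m : ℕ) (p : GapWord → Prop) [DecidablePred p] :
    #{w ∈ gapWords (m + 1) | p w} = ∑ l, #{w ∈ gapWords m | p (snocWord m w l)} := by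
  have hm : (m : ℤ) ∉ Ico (0 : ℤ) m := by simp
  have hIco : Ico (0 : ℤ) (m + 1 : ℕ) = insert (m : ℤ) (Ico (0 : ℤ) m) := by grind
  simp only [card_filter, gapWords, sum_product, hIco, sum_powerset_insert hm, sum_add_distrib,
    Fintype.sum_prod_type, Fintype.sum_bool, snocWord, if_true, Bool.false_eq_true, if_false]
  ring

lemma card_fst_snocWord (hw : w ∈ gapWords m) (l : Bool × Bool) :
    (#(snocWord m w l).1 : ℤ) = #w.1 + l.1.toNat := by
  have hm := natCast_notMem_of_subset (mem_gapWords.1 hw).1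
  cases hl : l.1 <;> simp [snocWord, hl, card_insert_of_notMem hm]

lemma card_snd_snocWord (hw : w ∈ gapWords m) (l : Bool × Bool) :
    (#(snocWord m w l).2 : ℤ) = #w.2 + l.2.toNat := by
  have hm := natCast_notMem_of_subset (mem_gapWords.1 hw).2
  cases hl : l.2 <;> simp [snocWord, hl, card_insert_of_notMem hm]

lemma snocWord_mem_gapWords (hw : w ∈ gapWords m) (l : Bool × Bool) :
    snocWord m w l ∈ gapWords (m + 1) := by
  obtain ⟨h₁, h₂⟩ := mem_gapWords.1 hw
  rw [mem_gapWords]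
  simp only [snocWord]
  constructor <;> split_ifs <;> grind

lemma height_snocWord {i : ℤ} (hi : i ≤ m) : height (snocWord m w l) i = height w i := by
  cases h₁ : l.1 <;> cases h₂ : l.2 <;> simp [height, snocWord, h₁, h₂, filter_insert, hi.not_gt]

lemma gapHeight_snocWord {i : ℤ} (hi : i < m) : gapHeight (snocWord m w l) i = gapHeight w i := by
  have hmem : i ∈ (snocWord m w l).2 ↔ i ∈ w.2 := by
    simp only [snocWord]
    grind
  simp only [gapHeight, height_snocWord hi.le, hmem]

lemma gapHeight_snocWord_self (hw : w ∈ gapWords m) (l : Bool × Bool) :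
    gapHeight (snocWord m w l) m = #w.1 - #(snocWord m w l).2 := by
  have hm := natCast_notMem_of_subset (mem_gapWords.1 hw).2
  rw [gapHeight, height_snocWord le_rfl, height_length hw, card_snd_snocWord hw]
  cases hl : l.2 <;> simp [snocWord, hl, hm]
  ring

end SnocWord

/-- The words of length `m` with `a` openers and `b` closers whose heights are at least `-h`. -/
noncomputable def highWords (h : ℤ) (m : ℕ) (a b : ℤ) : Finset GapWord :=
  {w ∈ gapWords m | #w.1 = a ∧ #w.2 = b ∧ ∀ i ∈ Icc (0 : ℤ) m, -h ≤ height w i}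

/-- The words of length `m` with `a` openers and `b` closers whose gap heights are at least `-h`. -/
noncomputable def gapHighWords (h : ℤ) (m : ℕ) (a b : ℤ) : Finset GapWord :=
  {w ∈ gapWords m | #w.1 = a ∧ #w.2 = b ∧ ∀ i ∈ Ico (0 : ℤ) m, -h ≤ gapHeight w i}

section HighWord

variable {h : ℤ} {m : ℕ} {a b : ℤ} {w : GapWord}

lemma mem_highWords : w ∈ highWords h m a b ↔
    w ∈ gapWords m ∧ #w.1 = a ∧ #w.2 = b ∧ ∀ i ∈ Icc (0 : ℤ) m, -h ≤ height w i := mem_filter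

lemma mem_gapHighWords : w ∈ gapHighWords h m a b ↔
    w ∈ gapWords m ∧ #w.1 = a ∧ #w.2 = b ∧ ∀ i ∈ Ico (0 : ℤ) m, -h ≤ gapHeight w i := mem_filter

lemma card_highWords_succ (h : ℤ) (m : ℕ) (a b : ℤ) :
    #(highWords h (m + 1) a b) = if -h ≤ a - b then
      ∑ l : Bool × Bool, #(highWords h m (a - l.1.toNat) (b - l.2.toNat)) else 0 := by
  have hIcc : Icc (0 : ℤ) (m + 1 : ℕ) = insert ((m + 1 : ℕ) : ℤ) (Icc (0 : ℤ) m) := by grind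
  have hmem {w : GapWord} (hw : w ∈ gapWords m) (l : Bool × Bool) :
      (#(snocWord m w l).1 = a ∧ #(snocWord m w l).2 = b ∧
        ∀ i ∈ Icc (0 : ℤ) (m + 1 : ℕ), -h ≤ height (snocWord m w l) i) ↔
      -h ≤ a - b ∧ #w.1 = a - l.1.toNat ∧ #w.2 = b - l.2.toNat ∧
        ∀ i ∈ Icc (0 : ℤ) m, -h ≤ height w i := by
    have hlast : height (snocWord m w l) (m + 1 : ℕ) =
        #(snocWord m w l).1 - #(snocWord m w l).2 := height_length (snocWord_mem_gapWords hw l)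
    rw [hIcc, forall_mem_insert, hlast,
      forall₂_congr fun i hi => by rw [height_snocWord (mem_Icc.1 hi).2],
      card_fst_snocWord hw, card_snd_snocWord hw]
    grind
  rw [highWords, card_filter_gapWords_succ, sum_congr rfl fun l _ =>
    congrArg card (filter_congr fun w hw => hmem hw l)]
  split_ifs with hab <;> simp [hab, highWords]

lemma card_gapHighWords_succ (h : ℤ) (m : ℕ) (a b : ℤ) :
    #(gapHighWords h (m + 1) a b) = ∑ l : Bool × Bool, if -h ≤ a - l.1.toNat - b then
      #(gapHighWords h m (a - l.1.toNat) (b - l.2.toNat)) else 0 := by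
  have hIco : Ico (0 : ℤ) (m + 1 : ℕ) = insert (m : ℤ) (Ico (0 : ℤ) m) := by grind
  have hmem {w : GapWord} (hw : w ∈ gapWords m) (l : Bool × Bool) :
      (#(snocWord m w l).1 = a ∧ #(snocWord m w l).2 = b ∧
        ∀ i ∈ Ico (0 : ℤ) (m + 1 : ℕ), -h ≤ gapHeight (snocWord m w l) i) ↔
      -h ≤ a - l.1.toNat - b ∧ #w.1 = a - l.1.toNat ∧ #w.2 = b - l.2.toNat ∧
        ∀ i ∈ Ico (0 : ℤ) m, -h ≤ gapHeight w i := by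
    rw [hIco, forall_mem_insert, gapHeight_snocWord_self hw,
      forall₂_congr fun i hi => by rw [gapHeight_snocWord (mem_Ico.1 hi).2],
      card_fst_snocWord hw, card_snd_snocWord hw]
    grind
  rw [gapHighWords, card_filter_gapWords_succ]
  refine sum_congr rfl fun l _ => ?_
  rw [filter_congr fun w hw => hmem hw l]
  split_ifs with hab <;> simp [hab, gapHighWords]

end HighWord

/-- The binomial coefficient with an integer lower index, which vanishes for negative indices. -/
def intChoose (m : ℕ) (k : ℤ) : ℤ := if 0 ≤ k then m.choose k.toNat else 0

section IntChoose

lemma intChoose_natCast (m k : ℕ) : intChoose m k = m.choose k := by simp [intChoose]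

lemma intChoose_of_neg (m : ℕ) {k : ℤ} (hk : k < 0) : intChoose m k = 0 := if_neg hk.not_ge

lemma intChoose_zero (k : ℤ) : intChoose 0 k = if k = 0 then 1 else 0 := by
  rcases k with (_ | k) | k <;> simp [intChoose]
  omega

lemma intChoose_succ (m : ℕ) (k : ℤ) :
    intChoose (m + 1) k = intChoose m k + intChoose m (k - 1) := by
  rcases lt_trichotomy k 0 with hk | rfl | hk
  · rw [intChoose_of_neg _ hk, intChoose_of_neg _ hk, intChoose_of_neg _ (by omega), add_zero]
  · simp [intChoose]
  · obtain ⟨k, rfl⟩ : ∃ j : ℕ, k = (j + 1 : ℕ) := ⟨(k - 1).toNat, by omega⟩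
    rw [intChoose_natCast, intChoose_natCast, Nat.choose_succ_succ', Nat.cast_succ,
      add_sub_cancel_right, intChoose_natCast]
    push_cast
    ring

end IntChoose

lemma gapWords_zero : gapWords 0 = {(∅, ∅)} := by simp [gapWords]

/-- A reflection principle: the words without height constraint are counted by the first product,
those violating it by the second. -/
lemma card_highWords {h : ℤ} (hh : -1 ≤ h) (m : ℕ) {a b : ℤ} (hab : b ≤ a + h + 1) :
    #(highWords h m a b) = intChoose m a * intChoose m b -
      intChoose m (a + h + 1) * intChoose m (b - h - 1) := by
  induction m generalizing a b with
  | zero =>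
    have hwords : #(highWords h 0 a b) = if 0 = a ∧ 0 = b ∧ 0 ≤ h then 1 else 0 := by
      rw [highWords, gapWords_zero, filter_singleton]
      simp [height, apply_ite]
    simp only [hwords, intChoose_zero]
    push_cast
    grind
  | succ m ih =>
    rw [card_highWords_succ]
    split_ifs with hle
    · push_cast
      have hlen (l : Bool × Bool) : b - l.2.toNat ≤ a - l.1.toNat + h + 1 := by
        have := l.1.toNat_le
        omega
      simp only [ih (hlen _), Fintype.sum_prod_type, Fintype.sum_bool, intChoose_succ,
        Bool.toNat_true, Bool.toNat_false]
      ring_nf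
    · obtain rfl : b = a + h + 1 := by omega
      ring_nf

lemma card_gapHighWords_add_one {h : ℤ} (hh : 0 ≤ h) (m : ℕ) {a b : ℤ} (hab : b ≤ a + h) :
    #(gapHighWords h (m + 1) a b) = intChoose (m + 1) a * intChoose (m + 1) b -
      intChoose m (b - h - 1) * intChoose (m + 2) (a + h + 1) := by
  induction m generalizing a b with
  | zero =>
    have hwords (a b : ℤ) : #(gapHighWords h 0 a b) = if 0 = a ∧ 0 = b then 1 else 0 := by
      rw [gapHighWords, gapWords_zero, filter_singleton]
      simp [apply_ite]
    simp only [card_gapHighWords_succ, hwords, Fintype.sum_prod_type, Fintype.sum_bool,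
      Bool.toNat_true, Bool.toNat_false, intChoose_succ, intChoose_zero]
    push_cast
    grind (splits := 25)
  | succ m ih =>
    rw [card_gapHighWords_succ]
    push_cast
    simp only [Fintype.sum_prod_type, Fintype.sum_bool, Bool.toNat_true, Bool.toNat_false,
      Nat.cast_one, Nat.cast_zero, sub_zero, if_pos (show -h ≤ a - b by omega)]
    rcases hab.lt_or_eq with hlt | rfl
    · simp only [if_pos (show -h ≤ a - 1 - b by omega), ih (show b ≤ a - 1 + h by omega),
        ih (show b - 1 ≤ a - 1 + h by omega), ih hab, ih (show b - 1 ≤ a + h by omega),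
        intChoose_succ]
      ring_nf
    · rw [if_neg (by omega), if_neg (by omega), ih le_rfl, ih (by omega)]
      simp only [intChoose_succ]
      ring_nf

lemma card_balancedWords_filter (m j : ℕ) :
    #{w ∈ balancedWords m | #w.1 = j} = m.choose j ^ 2 := by
  have hprod : {w ∈ balancedWords m | #w.1 = j} =
      (Ico (0 : ℤ) m).powersetCard j ×ˢ (Ico (0 : ℤ) m).powersetCard j := by
    ext w
    simp only [mem_filter, mem_balancedWords, mem_gapWords, mem_product, mem_powersetCard]
    grind
  rw [hprod, card_product, card_powersetCard, Int.card_Ico, sub_zero, Int.toNat_natCast, sq]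

lemma card_dyckWords_filter (N j : ℕ) :
    (#{w ∈ dyckWords N | #w.1 = j} : ℤ) =
      intChoose N j ^ 2 - intChoose N (j + 1) * intChoose N (j - 1) := by
  have hwords : {w ∈ dyckWords N | #w.1 = j} = highWords 0 N j j := by
    ext w
    simp only [mem_filter, mem_dyckWords, mem_balancedWords, mem_highWords]
    grind
  rw [hwords, card_highWords (by omega) N (by omega)]
  ring_nf

lemma card_dyckPrefixes_filter (M c : ℕ) :
    #{v ∈ dyckPrefixes M | #v.1 + #v.2 = c} = M.choose (c / 2) * M.choose (c - c / 2) := by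
  have hlast {v : GapWord} (hv : v ∈ dyckPrefixes M) : #v.2 ≤ #v.1 := by
    obtain ⟨hv, hnonneg⟩ := mem_filter.1 hv
    have := height_length hv ▸ hnonneg M (by simp)
    omega
  have hfiber (b : ℕ) (hb : b ∈ range (c / 2 + 1)) :
      {v ∈ {v ∈ dyckPrefixes M | #v.1 + #v.2 = c} | #v.2 = b} = highWords 0 M (c - b) b := by
    rw [mem_range] at hb
    ext v
    simp only [mem_filter, dyckPrefixes, mem_highWords]
    grind
  have hcard (b : ℕ) (hb : b ∈ range (c / 2 + 1)) : (#(highWords 0 M (c - b) b) : ℤ) =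
      intChoose M (c - (b + 1 : ℕ) + 1) * intChoose M ((b + 1 : ℕ) - 1) -
        intChoose M (c - b + 1) * intChoose M (b - 1) := by
    rw [card_highWords (by omega) M (by grind)]
    push_cast
    ring_nf
  apply Nat.cast_injective (R := ℤ)
  rw [card_eq_sum_card_fiberwise (f := fun v => #v.2) (t := range (c / 2 + 1)) (fun v hv => ?_), 
    sum_congr rfl fun b hb => congrArg card (hfiber b hb), Nat.cast_sum, sum_congr rfl hcard,
    sum_range_sub (fun b : ℕ => intChoose M (c - b + 1) * intChoose M (b - 1))]
  · rw [Nat.cast_mul, ← intChoose_natCast, ← intChoose_natCast,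
      intChoose_of_neg (k := (0 : ℕ) - 1) _ (by simp)]
    push_cast [Nat.div_le_self]
    ring_nf
  · obtain ⟨hv, hc⟩ := mem_filter.1 hv
    have := hlast hv
    simp only [coe_range, Set.mem_Iio]
    omega

section OpenLevel

variable {m j : ℕ} {h : ℤ} {w : GapWord}

lemma neg_card_snd_le_height (w : GapWord) (i : ℤ) : -(#w.2 : ℤ) ≤ height w i := by
  have := card_filter_le w.2 (· < i)
  rw [height]
  omega

lemma mem_gapHighWords_sdiff_highWords (hm : 0 < m) (hh : 0 ≤ h) :
    w ∈ gapHighWords h m j j \ highWords (h - 1) m j j ↔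
      (w ∈ balancedWords m ∧ #w.1 = j) ∧
        ∃ x ∈ Ico (0 : ℤ) m, height w x = -h ∧ ∀ z ∈ Ico (0 : ℤ) m, -h ≤ gapHeight w z := by
  simp only [mem_sdiff, mem_gapHighWords, mem_highWords, mem_balancedWords, Nat.cast_inj]
  constructor
  · rintro ⟨⟨hw, hfst, hsnd, hgap⟩, hlow⟩
    refine ⟨⟨⟨hw, hfst.trans hsnd.symm⟩, hfst⟩, ?_⟩
    push Not at hlow
    obtain ⟨i, hi, hlow⟩ := hlow hw hfst hsnd
    rw [mem_Icc] at hi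
    obtain rfl | hlt := hi.2.eq_or_lt
    · rw [height_length hw, hfst, hsnd] at hlow
      exact ⟨0, by simpa using hm, by rw [height_zero hw]; omega, hgap⟩
    · have hx := mem_Ico.2 ⟨hi.1, hlt⟩
      have := (hgap i hx).trans (gapHeight_le_height w i)
      exact ⟨i, hx, by omega, hgap⟩
  · rintro ⟨⟨⟨hw, hbal⟩, hfst⟩, x, hx, hxh, hgap⟩
    refine ⟨⟨hw, hfst, hbal ▸ hfst, hgap⟩, fun hhigh => ?_⟩
    have := hhigh.2.2.2 x (Ico_subset_Icc_self hx)
    omega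

lemma highWords_sub_one_subset_gapHighWords (h : ℤ) (m : ℕ) (a b : ℤ) :
    highWords (h - 1) m a b ⊆ gapHighWords h m a b := by
  intro w hw
  obtain ⟨hw, hfst, hsnd, hhigh⟩ := mem_highWords.1 hw
  refine mem_gapHighWords.2 ⟨hw, hfst, hsnd, fun i hi => ?_⟩
  have := hhigh i (Ico_subset_Icc_self hi)
  rw [gapHeight]
  split_ifs <;> omega

open Classical in
/-- The words with an open level are sorted by the height `-h` of that level. -/
lemma filter_hasOpenLevel_eq_biUnion (hm : 0 < m) (j : ℕ) :
    {w ∈ balancedWords m | #w.1 = j ∧ HasOpenLevel m w} =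
      (range (j + 1)).biUnion fun h => gapHighWords h m j j \ highWords (h - 1) m j j := by
  ext w
  simp only [mem_biUnion, mem_gapHighWords_sdiff_highWords hm (Int.natCast_nonneg _), mem_filter,
    mem_range]
  constructor
  · rintro ⟨hw, hj, x, hx, hlevel⟩
    obtain ⟨hgw, hbal⟩ := mem_balancedWords.1 hw
    have hzero := (hlevel 0 (by simpa using hm)).trans (gapHeight_le_height w 0)
    rw [height_zero hgw] at hzero
    have hcard := neg_card_snd_le_height w x
    have habs : -((-height w x).toNat : ℤ) = height w x := by omega
    exact ⟨(-height w x).toNat, by omega, ⟨hw, hj⟩, x, hx, habs.symm, fun z hz =>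
      habs.trans_le (hlevel z hz)⟩
  · rintro ⟨h, -, ⟨hw, hj⟩, x, hx, hxh, hgap⟩
    exact ⟨hw, hj, x, hx, hxh ▸ hgap⟩

lemma pairwise_disjoint_gapHighWords_sdiff_highWords (hm : 0 < m) (s : Set ℕ) :
    s.PairwiseDisjoint fun h => gapHighWords h m j j \ highWords (h - 1) m j j := by
  refine fun h _ h' _ hne => disjoint_left.2 fun w hw hw' => hne ?_
  obtain ⟨-, x, hx, hxh, hgap⟩ :=
    (mem_gapHighWords_sdiff_highWords hm (Int.natCast_nonneg _)).1 hw
  obtain ⟨-, x', hx', hxh', hgap'⟩ :=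
    (mem_gapHighWords_sdiff_highWords hm (Int.natCast_nonneg _)).1 hw'
  have := (hgap x' hx').trans (gapHeight_le_height w x')
  have := (hgap' x hx).trans (gapHeight_le_height w x)
  omega

open Classical in
lemma card_filter_hasOpenLevel (m j : ℕ) :
    #{w ∈ balancedWords (m + 1) | #w.1 = j ∧ HasOpenLevel (m + 1) w} =
      (m + 1).choose j * m.choose j := by
  have hlevel (h : ℕ) :
      (#(gapHighWords h (m + 1) j j \ highWords (h - 1) (m + 1) j j) : ℤ) =
        intChoose (m + 1) (j + h) * intChoose m (j - h) -
          intChoose (m + 1) (j + (h + 1 : ℕ)) * intChoose m (j - (h + 1 : ℕ)) := by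
    rw [cast_card_sdiff (highWords_sub_one_subset_gapHighWords _ _ _ _),
      card_gapHighWords_add_one (by omega) m (by omega), card_highWords (by omega) _ (by omega)]
    simp only [intChoose_succ]
    push_cast
    ring_nf
  have hm : 0 < m + 1 := m.succ_pos
  apply Nat.cast_injective (R := ℤ)
  rw [filter_hasOpenLevel_eq_biUnion hm,
    card_biUnion (pairwise_disjoint_gapHighWords_sdiff_highWords hm _),
    Nat.cast_sum, sum_congr rfl fun h _ => hlevel h, sum_range_sub'
      (fun h : ℕ => intChoose (m + 1) (j + h) * intChoose m (j - h)),
    intChoose_of_neg (k := j - (j + 1 : ℕ)) _ (by omega)]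
  simp [intChoose_natCast]

open Classical in
lemma card_filter_not_hasOpenLevel (m j : ℕ) :
    #{w ∈ balancedWords (m + 1) | #w.1 = j + 1 ∧ ¬ HasOpenLevel (m + 1) w} =
      (m + 1).choose (j + 1) * m.choose j := by
  have hsplit := card_filter_add_card_filter_not (s := {w ∈ balancedWords (m + 1) | #w.1 = j + 1})
    (HasOpenLevel (m + 1))
  rw [filter_filter, filter_filter, card_filter_hasOpenLevel, card_balancedWords_filter, sq,
    Nat.choose_succ_succ' m j] at hsplit
  rw [Nat.choose_succ_succ' m j]
  nlinarith

end OpenLevel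

/-! ### Specialising Fibonacci factorials -/

lemma gfib_add_add_one (m n : ℕ) :
    gfib (m + n + 1) = gfib (m + 1) * gfib (n + 1) + X 1 * gfib m * gfib n := by
  induction n using Nat.twoStepInduction with
  | zero => simp [gfib]
  | one => simp only [gfib]; ring
  | more n ih₀ ih₁ =>
    rw [show m + (n + 2) + 1 = m + n + 1 + 2 by ring, gfib, ih₀,
      show m + n + 1 + 1 = m + (n + 1) + 1 by ring, ih₁]
    simp only [gfib]
    ring

lemma map_gfib_two_neg_one {R : Type*} [CommRing R] {φ : MvPolynomial (Fin 2) ℤ →ₐ[ℤ] R}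
    (hs : φ (X 0) = 2) (ht : φ (X 1) = -1) (m : ℕ) : φ (gfib m) = m := by
  induction m using Nat.twoStepInduction with
  | zero => simp [gfib]
  | one => simp [gfib]
  | more m ih₀ ih₁ =>
    rw [gfib, map_add, map_mul, map_mul, hs, ht, ih₀, ih₁]
    push_cast
    ring

lemma map_gfibFact_two_neg_one {R : Type*} [CommRing R] {φ : MvPolynomial (Fin 2) ℤ →ₐ[ℤ] R}
    (hs : φ (X 0) = 2) (ht : φ (X 1) = -1) (m : ℕ) :
    φ (gfibFact m) = m.factorial := by
  induction m with
  | zero => simp [gfibFact]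
  | succ m ih =>
    rw [gfibFact, map_mul, map_gfib_two_neg_one hs ht, ih, Nat.factorial_succ, Nat.cast_mul]

lemma gfib_ne_zero {m : ℕ} (hm : 0 < m) : gfib m ≠ 0 := by
  intro h
  have hm' := map_gfib_two_neg_one (φ := aeval ![(2 : ℤ), -1]) (by simp) (by simp) m
  rw [h, map_zero] at hm'
  omega

lemma map_gfibFact_ne_zero {R : Type*} [CommRing R] [IsDomain R]
    {φ : MvPolynomial (Fin 2) ℤ →ₐ[ℤ] R} {m : ℕ}
    (h : ∀ r, 0 < r → r ≤ m → φ (gfib r) ≠ 0) : φ (gfibFact m) ≠ 0 := by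
  induction m with
  | zero => simp [gfibFact]
  | succ m ih =>
    rw [gfibFact, map_mul]
    exact mul_ne_zero (h _ m.succ_pos le_rfl) (ih fun r hr hrm => h r hr (hrm.trans m.le_succ))

lemma mul_gfibFact_eq_of_mul_gfib_eq {P : MvPolynomial (Fin 2) ℤ} {n k : ℕ} (hn : 0 < n)
    (hP : P * (gfib n * gfibFact k * gfibFact (n - k) * gfibFact (k + 1) *
      gfibFact (n - k - 1)) = gfibFact n * gfibFact n) :
    P * (gfibFact k * gfibFact (n - k) * gfibFact (k + 1) * gfibFact (n - k - 1)) =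
      gfibFact n * gfibFact (n - 1) := by
  refine mul_left_cancel₀ (gfib_ne_zero hn) ?_
  obtain ⟨n, rfl⟩ : ∃ j, n = j + 1 := ⟨n - 1, by omega⟩
  rw [add_tsub_cancel_right, mul_left_comm, ← mul_assoc (gfib (n + 1)) (gfibFact (n + 1)),
    mul_comm (gfib (n + 1)) (gfibFact (n + 1)), mul_assoc (gfibFact (n + 1)), ← gfibFact, ← hP]
  ring

section Specialization

variable {R : Type*} [CommRing R] {φ : MvPolynomial (Fin 2) ℤ →ₐ[ℤ] R} {d : ℕ}

lemma map_gfib_mul_add_one (h₀ : φ (gfib d) = 0) (h₁ : φ (gfib (d + 1)) = 1) (q r : ℕ) :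
    φ (gfib (d * q + r + 1)) = φ (gfib (r + 1)) := by
  induction q with
  | zero => rw [mul_zero, zero_add]
  | succ q ih =>
    rw [show d * (q + 1) + r = d * q + r + d by ring, gfib_add_add_one, map_add, map_mul, map_mul,
      h₀, h₁, ih, mul_zero, mul_one, add_zero]

/-- The quotients satisfy `Q (i + 1) = {d i + 1} + t {d - 1} Q i`, and `φ (t {d - 1}) = 1`. -/
lemma exists_gfib_mul_eq (hd : 0 < d) (h₀ : φ (gfib d) = 0) (h₁ : φ (gfib (d + 1)) = 1) (i : ℕ) :
    ∃ Q, gfib (d * i) = gfib d * Q ∧ φ Q = i := by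
  obtain ⟨e, rfl⟩ : ∃ e, d = e + 1 := ⟨d - 1, by omega⟩
  induction i with
  | zero => exact ⟨0, by simp [gfib], by simp⟩
  | succ i ih =>
    obtain ⟨Q, hQ, hφ⟩ := ih
    have hmod : φ (gfib ((e + 1) * i + 1)) = 1 := by
      simpa [gfib] using map_gfib_mul_add_one h₀ h₁ i 0
    have hte : φ (X 1) * φ (gfib e) = 1 := by
      rw [gfib, map_add, map_mul, map_mul, h₀, mul_zero, zero_add] at h₁
      exact h₁
    refine ⟨gfib ((e + 1) * i + 1) + X 1 * gfib e * Q, ?_, ?_⟩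
    · rw [mul_add_one, ← add_assoc, gfib_add_add_one, hQ]
      ring
    · rw [map_add, map_mul, map_mul, hmod, hte, hφ]
      push_cast
      ring

/-- The value under `φ` of the Fibonacci factorial of `N` without its factors `{d}`, where
`φ {d} = 0` and `φ {d + 1} = 1`. -/
noncomputable def reducedFact (φ : MvPolynomial (Fin 2) ℤ →ₐ[ℤ] R) (d N : ℕ) : R :=
  (N / d).factorial * φ (gfibFact (d - 1)) ^ (N / d) * φ (gfibFact (N % d))

lemma mul_add_div_of_lt {q r : ℕ} (hr : r < d) : (d * q + r) / d = q := by
  rw [Nat.mul_add_div (by omega), Nat.div_eq_of_lt hr, add_zero]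

lemma reducedFact_mul_add {q r : ℕ} (hr : r < d) : reducedFact φ d (d * q + r) =
    q.factorial * φ (gfibFact (d - 1)) ^ q * φ (gfibFact r) := by
  rw [reducedFact, mul_add_div_of_lt hr, Nat.mul_add_mod, Nat.mod_eq_of_lt hr]

lemma reducedFact_mul (hd : 0 < d) (q : ℕ) :
    reducedFact φ d (d * q) = q.factorial * φ (gfibFact (d - 1)) ^ q := by
  simpa [gfibFact] using reducedFact_mul_add (φ := φ) (q := q) hd

lemma exists_gfibFact_eq_pow_mul (hd : 0 < d) (h₀ : φ (gfib d) = 0)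
    (h₁ : φ (gfib (d + 1)) = 1) (N : ℕ) :
    ∃ Q, gfibFact N = gfib d ^ (N / d) * Q ∧ φ Q = reducedFact φ d N := by
  induction N with
  | zero => exact ⟨1, by simp [gfibFact], by simp [reducedFact, gfibFact]⟩
  | succ N ih =>
    obtain ⟨Q, hQ, hφ⟩ := ih
    obtain ⟨q, r, hr, rfl⟩ : ∃ q r, r < d ∧ N = d * q + r :=
      ⟨N / d, N % d, Nat.mod_lt N hd, (Nat.div_add_mod N d).symm⟩
    rw [mul_add_div_of_lt hr] at hQ
    rw [reducedFact_mul_add hr] at hφ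
    obtain hlt | rfl : r + 1 < d ∨ d = r + 1 := by omega
    · refine ⟨gfib (d * q + r + 1) * Q, ?_, ?_⟩
      · rw [add_assoc, mul_add_div_of_lt hlt, ← add_assoc, gfibFact, hQ]
        ring
      · rw [map_mul, map_gfib_mul_add_one h₀ h₁, hφ, add_assoc, reducedFact_mul_add hlt,
          gfibFact, map_mul]
        ring
    · obtain ⟨Q', hQ', hφ'⟩ := exists_gfib_mul_eq hd h₀ h₁ (q + 1)
      have hN : (r + 1) * q + r + 1 = (r + 1) * (q + 1) := by ring
      refine ⟨Q' * Q, ?_, ?_⟩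
      · rw [gfibFact, hQ, hN, hQ', Nat.mul_div_cancel_left _ hd]
        ring
      · rw [map_mul, hφ, hφ', hN, reducedFact_mul hd, add_tsub_cancel_right, Nat.factorial_succ]
        push_cast
        ring

lemma reducedFact_ne_zero [IsDomain R] [CharZero R] (hd : 0 < d)
    (hφ : ∀ r, 0 < r → r < d → φ (gfib r) ≠ 0) (N : ℕ) : reducedFact φ d N ≠ 0 := by
  have hfact {r : ℕ} (hr : r < d) : φ (gfibFact r) ≠ 0 :=
    map_gfibFact_ne_zero fun i hi hir => hφ i hi (hir.trans_lt hr)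
  exact mul_ne_zero (mul_ne_zero (Nat.cast_ne_zero.2 (Nat.factorial_ne_zero _))
    (pow_ne_zero _ (hfact (by omega)))) (hfact (Nat.mod_lt N hd))

/-- Both sides of the identity for `P` lose their factors `{d}`, of which the right-hand side
has `e` more. -/
lemma map_mul_reducedFact_eq {P : MvPolynomial (Fin 2) ℤ} {k₁ k₂ k₃ k₄ n₁ n₂ e : ℕ} (hd : 0 < d)
    (h₀ : φ (gfib d) = 0) (h₁ : φ (gfib (d + 1)) = 1)
    (hP : P * (gfibFact k₁ * gfibFact k₂ * gfibFact k₃ * gfibFact k₄) = gfibFact n₁ * gfibFact n₂)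
    (he : k₁ / d + k₂ / d + k₃ / d + k₄ / d + e = n₁ / d + n₂ / d) :
    φ P * (reducedFact φ d k₁ * reducedFact φ d k₂ * reducedFact φ d k₃ * reducedFact φ d k₄) =
      0 ^ e * (reducedFact φ d n₁ * reducedFact φ d n₂) := by
  choose Q hQ hφ using exists_gfibFact_eq_pow_mul hd h₀ h₁
  have hcancel : P * (Q k₁ * Q k₂ * Q k₃ * Q k₄) = gfib d ^ e * (Q n₁ * Q n₂) := by
    refine mul_left_cancel₀ (pow_ne_zero (k₁ / d + k₂ / d + k₃ / d + k₄ / d) (gfib_ne_zero hd)) ?_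
    rw [← mul_assoc _ (gfib d ^ e), ← pow_add, he]
    calc _ = P * (gfibFact k₁ * gfibFact k₂ * gfibFact k₃ * gfibFact k₄) := by
          simp only [hQ k₁, hQ k₂, hQ k₃, hQ k₄]; ring
      _ = gfibFact n₁ * gfibFact n₂ := hP
      _ = _ := by simp only [hQ n₁, hQ n₂]; ring
  simpa only [map_mul, map_pow, hφ, h₀] using congrArg φ hcancel

end Specialization

lemma intChoose_sq_sub_mul_factorial (k j : ℕ) :
    (intChoose (k + j) j ^ 2 - intChoose (k + j) (j + 1) * intChoose (k + j) (j - 1)) *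
      (k.factorial * (j + 1).factorial * (k + 1).factorial * j.factorial) =
      (k + j + 1).factorial * (k + j).factorial := by
  have hself : ((k + j).choose j : ℤ) * k.factorial * j.factorial = (k + j).factorial := by
    exact_mod_cast Nat.add_choose_mul_factorial_mul_factorial k j
  have hsucc : ((k + j).choose (j + 1) * (j + 1) : ℤ) = (k + j).choose j * k := by
    have hchoose := (k + j).choose_succ_right_eq j
    rw [Nat.add_sub_cancel] at hchoose
    exact_mod_cast hchoose
  have hpred : intChoose (k + j) (j - 1) * (k + 1) = (k + j).choose j * j := by
    cases j with
    | zero => simp [intChoose_of_neg]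
    | succ j =>
      have hchoose := (k + (j + 1)).choose_succ_right_eq j
      rw [show k + (j + 1) - j = k + 1 by omega] at hchoose
      rw [Nat.cast_succ, add_sub_cancel_right, intChoose_natCast]
      exact_mod_cast hchoose.symm
  rw [← Nat.cast_add_one, intChoose_natCast, intChoose_natCast]
  simp only [Nat.factorial_succ, Nat.cast_mul, Nat.cast_add, Nat.cast_one, ← hself]
  linear_combination -(k.factorial * j.factorial) ^ 2 *
    (hsucc * intChoose (k + j) (j - 1) * (k + 1) + (k + j).choose j * k * hpred)

section NarayanaValue

variable {K : Type*} [Field K] {φ : MvPolynomial (Fin 2) ℤ →ₐ[ℤ] K}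
  {P : MvPolynomial (Fin 2) ℤ} {w : K} {d q j r : ℕ}

lemma sub_inv_mul_map_gfib (hw : w ≠ 0) (hs : φ (X 0) = w + w⁻¹) (ht : φ (X 1) = -1) (m : ℕ) :
    (w - w⁻¹) * φ (gfib m) = w ^ m - w⁻¹ ^ m := by
  induction m using Nat.twoStepInduction with
  | zero => simp [gfib]
  | one => simp [gfib]
  | more m ih₀ ih₁ =>
    rw [gfib, map_add, map_mul, map_mul, hs, ht]
    linear_combination (w + w⁻¹) * ih₁ - ih₀ + (w ^ m - w⁻¹ ^ m) * mul_inv_cancel₀ hw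

lemma pow_eq_inv_pow_iff (hd : Odd d) (hw : IsPrimitiveRoot w d) (m : ℕ) :
    w ^ m = w⁻¹ ^ m ↔ d ∣ m := by
  have hw0 : w ≠ 0 := hw.ne_zero hd.pos.ne'
  rw [inv_pow, ← mul_eq_one_iff_eq_inv₀ (pow_ne_zero m hw0), ← pow_add, ← two_mul,
    hw.pow_eq_one_iff_dvd, (Nat.coprime_two_right.2 hd).dvd_mul_left]

lemma sub_inv_ne_zero (hd : Odd d) (hd3 : 3 ≤ d) (hw : IsPrimitiveRoot w d) : w - w⁻¹ ≠ 0 := by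
  rw [sub_ne_zero, ← pow_one w, ← inv_pow, Ne, pow_eq_inv_pow_iff hd hw, Nat.dvd_one]
  omega

lemma map_gfib_eq_zero_iff (hd : Odd d) (hd3 : 3 ≤ d) (hw : IsPrimitiveRoot w d)
    (hs : φ (X 0) = w + w⁻¹) (ht : φ (X 1) = -1) (m : ℕ) : φ (gfib m) = 0 ↔ d ∣ m := by
  rw [← pow_eq_inv_pow_iff hd hw, ← sub_eq_zero (a := w ^ m),
    ← sub_inv_mul_map_gfib (hw.ne_zero hd.pos.ne') hs ht, mul_eq_zero,
    or_iff_right (sub_inv_ne_zero hd hd3 hw)]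

lemma map_gfib_add_one_eq_one (hd : Odd d) (hd3 : 3 ≤ d) (hw : IsPrimitiveRoot w d)
    (hs : φ (X 0) = w + w⁻¹) (ht : φ (X 1) = -1) : φ (gfib (d + 1)) = 1 := by
  refine mul_left_cancel₀ (sub_inv_ne_zero hd hd3 hw) ?_
  rw [sub_inv_mul_map_gfib (hw.ne_zero hd.pos.ne') hs ht, pow_succ, pow_succ, inv_pow,
    hw.pow_eq_one, inv_one, one_mul, one_mul, mul_one]

lemma map_gfibFact_sub_one_ne_zero (hd : 0 < d) (hφ : ∀ m, φ (gfib m) = 0 ↔ d ∣ m) :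
    φ (gfibFact (d - 1)) ≠ 0 :=
  map_gfibFact_ne_zero fun r hr hrd => by
    rw [Ne, hφ]
    exact Nat.not_dvd_of_pos_of_lt hr (by omega)

variable [CharZero K]

lemma eq_choose_mul_choose_of_mul_factorial_eq {x : K} {a b a' b' : ℕ}
    (h : x * (a.factorial * b.factorial * (a'.factorial * b'.factorial)) =
      (a + b).factorial * (a' + b').factorial) :
    x = (a + b).choose a * (a' + b').choose a' := by
  have hne (m : ℕ) : (m.factorial : K) ≠ 0 := Nat.cast_ne_zero.2 m.factorial_ne_zero
  rw [Nat.cast_add_choose, Nat.cast_add_choose, div_mul_div_comm, eq_div_iff, h]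
  exact mul_ne_zero (mul_ne_zero (hne _) (hne _)) (mul_ne_zero (hne _) (hne _))

lemma map_narayana_of_dvd (hd : 2 ≤ d) (hφ : ∀ m, φ (gfib m) = 0 ↔ d ∣ m)
    (h₁ : φ (gfib (d + 1)) = 1)
    (hP : P * (gfibFact (d * q) * gfibFact (d * (j + 1)) * gfibFact (d * q + 1) *
      gfibFact (d * j + (d - 1))) = gfibFact (d * (q + j + 1)) * gfibFact (d * (q + j) + (d - 1))) :
    φ P = (q + j + 1).choose (j + 1) * (q + j).choose j := by
  have hd0 : 0 < d := by omega
  have hvalue := map_mul_reducedFact_eq (e := 0) hd0 ((hφ d).2 dvd_rfl) h₁ hP (by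
    simp only [mul_add_div_of_lt (show 1 < d by omega), Nat.mul_div_cancel_left _ hd0,
      mul_add_div_of_lt (show d - 1 < d by omega)]
    ring)
  rw [reducedFact_mul hd0, reducedFact_mul hd0, reducedFact_mul hd0,
    reducedFact_mul_add (show 1 < d by omega), reducedFact_mul_add (show d - 1 < d by omega),
    reducedFact_mul_add (show d - 1 < d by omega)] at hvalue
  simp only [gfibFact, gfib, map_one, mul_one, pow_zero, one_mul] at hvalue
  rw [add_assoc, add_comm q, add_comm q]
  refine eq_choose_mul_choose_of_mul_factorial_eq (mul_right_cancel₀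
    (pow_ne_zero (2 * (q + j + 1)) (map_gfibFact_sub_one_ne_zero hd0 hφ)) ?_)
  rw [add_comm _ q, add_comm _ q, ← add_assoc]
  linear_combination hvalue

lemma map_narayana_of_dvd_add_one (hd : 2 ≤ d) (hφ : ∀ m, φ (gfib m) = 0 ↔ d ∣ m)
    (h₁ : φ (gfib (d + 1)) = 1)
    (hP : P * (gfibFact (d * q + (d - 1)) * gfibFact (d * j + 1) * gfibFact (d * (q + 1)) *
      gfibFact (d * j)) = gfibFact (d * (q + j + 1)) * gfibFact (d * (q + j) + (d - 1))) :
    φ P = (q + j + 1).choose j * (q + j).choose j := by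
  have hd0 : 0 < d := by omega
  have hvalue := map_mul_reducedFact_eq (e := 0) hd0 ((hφ d).2 dvd_rfl) h₁ hP (by
    simp only [mul_add_div_of_lt (show 1 < d by omega), Nat.mul_div_cancel_left _ hd0,
      mul_add_div_of_lt (show d - 1 < d by omega)]
    ring)
  rw [reducedFact_mul hd0, reducedFact_mul hd0, reducedFact_mul hd0,
    reducedFact_mul_add (show 1 < d by omega), reducedFact_mul_add (show d - 1 < d by omega),
    reducedFact_mul_add (show d - 1 < d by omega)] at hvalue
  simp only [gfibFact, gfib, map_one, mul_one, pow_zero, one_mul] at hvalue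
  rw [show q + j + 1 = j + (q + 1) by ring, add_comm q j]
  refine eq_choose_mul_choose_of_mul_factorial_eq (mul_right_cancel₀
    (pow_ne_zero (2 * (q + j + 1)) (map_gfibFact_sub_one_ne_zero hd0 hφ)) ?_)
  rw [show j + (q + 1) = q + j + 1 by ring, add_comm j]
  linear_combination hvalue

lemma map_narayana_of_not_dvd (hφ : ∀ m, φ (gfib m) = 0 ↔ d ∣ m)
    (h₁ : φ (gfib (d + 1)) = 1) (hr : 0 < r) (hrd : r + 1 < d)
    (hP : P * (gfibFact (d * q + r) * gfibFact (d * j + (d - r)) * gfibFact (d * q + (r + 1)) *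
      gfibFact (d * j + (d - r - 1))) =
        gfibFact (d * (q + j + 1)) * gfibFact (d * (q + j) + (d - 1))) :
    φ P = 0 := by
  have hd : 0 < d := by omega
  have hne (N : ℕ) : reducedFact φ d N ≠ 0 :=
    reducedFact_ne_zero hd (fun r hr hrd => by rw [Ne, hφ]; exact Nat.not_dvd_of_pos_of_lt hr hrd) N
  have hvalue := map_mul_reducedFact_eq (e := 1) hd ((hφ d).2 dvd_rfl) h₁ hP (by
    rw [mul_add_div_of_lt (by omega), mul_add_div_of_lt (by omega), mul_add_div_of_lt (by omega),
      mul_add_div_of_lt (by omega), mul_add_div_of_lt (by omega), Nat.mul_div_cancel_left _ hd]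
    ring)
  simpa [hne] using hvalue

lemma map_narayana_two {k c M : ℕ} (h₀ : φ (gfib 2) = 0) (h₁ : φ (gfib 3) = 1)
    (hkc : k + c = 2 * M)
    (hP : P * (gfibFact k * gfibFact (c + 1) * gfibFact (k + 1) * gfibFact c) =
      gfibFact (2 * M + 1) * gfibFact (2 * M)) :
    φ P = M.choose (c / 2) * M.choose (c - c / 2) := by
  have hreduced (N : ℕ) : reducedFact φ 2 N = (N / 2).factorial := by
    rcases Nat.mod_two_eq_zero_or_one N with h | h <;> simp [reducedFact, h, gfibFact, gfib]
  have hvalue := map_mul_reducedFact_eq (e := 0) two_pos h₀ h₁ hP (by omega)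
  simp only [hreduced, pow_zero, one_mul, show (2 * M + 1) / 2 = M by omega,
    show 2 * M / 2 = M by omega, show (c + 1) / 2 = c - c / 2 by omega] at hvalue
  obtain ⟨hk, hk'⟩ : c / 2 + (k + 1) / 2 = M ∧ c - c / 2 + k / 2 = M := by omega
  have hchoose := eq_choose_mul_choose_of_mul_factorial_eq (K := K) (x := φ P) (a := c / 2)
    (b := (k + 1) / 2) (a' := c - c / 2) (b' := k / 2) (by rw [hk, hk']; linear_combination hvalue)
  rwa [hk, hk'] at hchoose

lemma map_narayana_one {k : ℕ} (hs : φ (X 0) = 2) (ht : φ (X 1) = -1)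
    (hP : P * (gfibFact k * gfibFact (j + 1) * gfibFact (k + 1) * gfibFact j) =
      gfibFact (k + j + 1) * gfibFact (k + j)) :
    φ P =
      (intChoose (k + j) j ^ 2 - intChoose (k + j) (j + 1) * intChoose (k + j) (j - 1) : ℤ) := by
  have hne (m : ℕ) : (m.factorial : K) ≠ 0 := Nat.cast_ne_zero.2 m.factorial_ne_zero
  have hvalue := congrArg φ hP
  simp only [map_mul, map_gfibFact_two_neg_one hs ht] at hvalue
  refine mul_right_cancel₀ (mul_ne_zero (mul_ne_zero (mul_ne_zero (hne k) (hne (j + 1)))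
    (hne (k + 1))) (hne j)) (hvalue.trans ?_)
  exact_mod_cast (intChoose_sq_sub_mul_factorial k j).symm

end NarayanaValue

/-! ### Comparing values and counts -/

section Sieving

variable {K : Type*} [Field K] [CharZero K] {φ : MvPolynomial (Fin 2) ℤ →ₐ[ℤ] K}
  {P : MvPolynomial (Fin 2) ℤ} {w : K} {n k m d q j : ℕ}

lemma mul_add_eq_mul_add_iff {q' r r' : ℕ} (hr : r < d) (hr' : r' < d) :
    d * q + r = d * q' + r' ↔ q = q' ∧ r = r' := by
  refine ⟨fun h => ?_, fun ⟨hq, hr⟩ => by rw [hq, hr]⟩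
  have hq : q = q' := by rw [← mul_add_div_of_lt (q := q) hr, h, mul_add_div_of_lt hr']
  exact ⟨hq, by rwa [hq, add_right_inj] at h⟩

open Classical in
lemma ncard_comap_add_eq_card_filter {e : ℕ} (hm : 0 < m) (hd : 3 ≤ d) (he : e < d) :
    {s ∈ cyclicNoncrossing (d * m) (d * j + e) | s.comap (· + (m : ℤ)) = s}.ncard =
      #{w ∈ balancedWords m | #w.1 = j ∧ (if HasOpenLevel m w then 1 else 0) = e} := by
  rw [ncard_cyclicNoncrossing_comap_add hm hd rfl]
  congr 1
  exact filter_congr fun w _ => mul_add_eq_mul_add_iff (by split_ifs <;> omega) he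

open Classical in
lemma ncard_comap_add_of_dvd (hd : 3 ≤ d) :
    {s ∈ cyclicNoncrossing (d * (q + j + 1)) (d * (j + 1)) |
      s.comap (· + ((q + j + 1 : ℕ) : ℤ)) = s}.ncard =
      (q + j + 1).choose (j + 1) * (q + j).choose j := by
  rw [← add_zero (d * (j + 1)), ncard_comap_add_eq_card_filter (Nat.succ_pos _) hd (by omega),
    ← card_filter_not_hasOpenLevel]
  exact congrArg card (filter_congr fun w _ => by simp)

open Classical in
lemma ncard_comap_add_of_dvd_add_one (hd : 3 ≤ d) :
    {s ∈ cyclicNoncrossing (d * (q + j + 1)) (d * j + 1) |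
      s.comap (· + ((q + j + 1 : ℕ) : ℤ)) = s}.ncard =
      (q + j + 1).choose j * (q + j).choose j := by
  rw [ncard_comap_add_eq_card_filter (Nat.succ_pos _) hd (by omega), ← card_filter_hasOpenLevel]
  exact congrArg card (filter_congr fun w _ => by simp)

lemma ncard_comap_add_of_not_dvd {e : ℕ} (hm : 0 < m) (he : 1 < e) (hed : e < d) :
    {s ∈ cyclicNoncrossing (d * m) (d * j + e) | s.comap (· + (m : ℤ)) = s}.ncard = 0 := by
  rw [ncard_comap_add_eq_card_filter hm (by omega) hed, card_eq_zero, filter_eq_empty_iff]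
  rintro w - ⟨-, h⟩
  split_ifs at h <;> omega

theorem map_narayana_eq_ncard_of_isPrimitiveRoot (hd : Odd d) (hd3 : 3 ≤ d)
    (hw : IsPrimitiveRoot w d) (hs : φ (X 0) = w + w⁻¹) (ht : φ (X 1) = -1) (hk : k < d * m)
    (hP : P * (gfibFact k * gfibFact (d * m - k) * gfibFact (k + 1) * gfibFact (d * m - k - 1)) =
      gfibFact (d * m) * gfibFact (d * m - 1)) :
    φ P = {s ∈ cyclicNoncrossing (d * m) (d * m - k) | s.comap (· + (m : ℤ)) = s}.ncard := by
  have hφ := map_gfib_eq_zero_iff hd hd3 hw hs ht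
  have h₁ := map_gfib_add_one_eq_one hd hd3 hw hs ht
  obtain ⟨q, r, hr, rfl⟩ : ∃ q r, r < d ∧ k = d * q + r :=
    ⟨k / d, k % d, Nat.mod_lt k hd.pos, (Nat.div_add_mod k d).symm⟩
  obtain ⟨j, rfl⟩ : ∃ j, m = q + j + 1 :=
    Nat.exists_eq_add_of_lt (Nat.lt_of_mul_lt_mul_left ((Nat.le_add_right _ r).trans_lt hk))
  have hsub : d * (q + j + 1) - (d * q + r) = d * j + (d - r) := by
    rw [show d * (q + j + 1) = d * q + (d * j + d) by ring]
    omega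
  have hpred : d * (q + j + 1) - 1 = d * (q + j) + (d - 1) := by
    rw [mul_add_one]
    omega
  rw [hsub, hpred, Nat.add_sub_assoc (by omega), add_assoc] at hP
  rw [hsub]
  obtain rfl | rfl | ⟨hr0, hrd⟩ : r = 0 ∨ r = d - 1 ∨ 0 < r ∧ r + 1 < d := by omega
  · rw [tsub_zero, ← mul_add_one, ncard_comap_add_of_dvd hd3, Nat.cast_mul]
    rw [add_zero, tsub_zero, zero_add, ← mul_add_one] at hP
    exact map_narayana_of_dvd (by omega) hφ h₁ hP
  · rw [Nat.sub_sub_self hd.pos, ncard_comap_add_of_dvd_add_one hd3, Nat.cast_mul]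
    rw [Nat.sub_sub_self hd.pos, Nat.sub_add_cancel hd.pos, Nat.sub_self, add_zero,
      ← mul_add_one] at hP
    exact map_narayana_of_dvd_add_one (by omega) hφ h₁ hP
  · rw [ncard_comap_add_of_not_dvd (Nat.succ_pos _) (by omega) (by omega), Nat.cast_zero]
    exact map_narayana_of_not_dvd hφ h₁ hr0 hrd hP

theorem map_narayana_eq_ncard_of_two_neg_one (hs : φ (X 0) = 2) (ht : φ (X 1) = -1) (hk : k < n)
    (hP : P * (gfibFact k * gfibFact (n - k) * gfibFact (k + 1) * gfibFact (n - k - 1)) =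
      gfibFact n * gfibFact (n - 1)) :
    φ P = (cyclicNoncrossing n (n - k)).ncard := by
  obtain ⟨j, rfl⟩ := Nat.exists_eq_add_of_lt hk
  rw [show k + j + 1 - k = j + 1 by omega] at hP ⊢
  rw [map_narayana_one hs ht hP, ncard_cyclicNoncrossing, ← card_dyckWords_filter]
  simp

theorem map_narayana_eq_ncard_comap_neg (hs : φ (X 0) = 0) (ht : φ (X 1) = 1) (hn : Odd n)
    (hk : k < n)
    (hP : P * (gfibFact k * gfibFact (n - k) * gfibFact (k + 1) * gfibFact (n - k - 1)) =
      gfibFact n * gfibFact (n - 1)) :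
    φ P = {s ∈ cyclicNoncrossing n (n - k) | s.comap (- ·) = s}.ncard := by
  obtain ⟨M, rfl⟩ := hn
  obtain ⟨c, hkc⟩ : ∃ c, k + c = 2 * M := ⟨2 * M - k, by omega⟩
  rw [show 2 * M + 1 - k = c + 1 by omega] at hP ⊢
  have h₀ : φ (gfib 2) = 0 := by simp [gfib, hs]
  have h₁ : φ (gfib 3) = 1 := by simp [gfib, hs, ht]
  have hcount := ncard_cyclicNoncrossing_comap_sub (2 * M) (c + 1)
  rw [Nat.cast_mul, Nat.cast_ofNat] at hcount
  rw [map_narayana_two h₀ h₁ hkc hP, ncard_cyclicNoncrossing_comap_neg _ _ M, hcount,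
    card_dyckWords_mirrorWord_eq]
  simp [card_dyckPrefixes_filter]

end Sieving

lemma isPrimitiveRoot_zpow_div_gcd {G : Type*} [DivisionCommMonoid G] {ζ : G} {n : ℕ} (hn : 0 < n)
    (hζ : IsPrimitiveRoot ζ n) (ℓ : ℤ) : IsPrimitiveRoot (ζ ^ ℓ) (n / ℓ.gcd n) := by
  have hdvd : ℓ.gcd n ∣ n := Int.natCast_dvd_natCast.1 (Int.gcd_dvd_right ℓ n)
  have hcoprime : (ℓ / ℓ.gcd n).gcd (n / ℓ.gcd n : ℕ) = 1 := by
    rw [Int.natCast_div]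
    exact Int.gcd_ediv_gcd_ediv_gcd (Int.gcd_pos_of_ne_zero_right ℓ (by omega))
  have hpow := (hζ.pow hn (Nat.mul_div_cancel' hdvd).symm).zpow_of_gcd_eq_one _ hcoprime
  rwa [← zpow_natCast, ← zpow_mul, Int.mul_ediv_cancel' (Int.gcd_dvd_left ℓ n)] at hpow

theorem aeval_narayana_eq_ncard_comap_add {K : Type*} [Field K] [CharZero K] {ζ : K} {n k : ℕ}
    {P : MvPolynomial (Fin 2) ℤ} (hζ : IsPrimitiveRoot ζ n) (hn : Odd n) (hk : k < n)
    (hP : P * (gfibFact k * gfibFact (n - k) * gfibFact (k + 1) * gfibFact (n - k - 1)) =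
      gfibFact n * gfibFact (n - 1)) (ℓ : ℤ) :
    aeval ![ζ ^ ℓ + ζ ^ (-ℓ), -1] P =
      ({s ∈ cyclicNoncrossing n (n - k) | s.comap (· + ℓ) = s}.ncard : K) := by
  have hperiod {s : Setoid ℤ} (hs : s ∈ cyclicNoncrossing n (n - k)) :
      s.comap (· + (n : ℤ)) = s := comap_add_eq_of_forall_rel_add hs.1.1
  have hw := isPrimitiveRoot_zpow_div_gcd hn.pos hζ ℓ
  have hgcd : {s ∈ cyclicNoncrossing n (n - k) | s.comap (· + ℓ) = s} =
      {s ∈ cyclicNoncrossing n (n - k) | s.comap (· + (ℓ.gcd n : ℤ)) = s} :=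
    Set.ext fun s => and_congr_right fun hs => comap_add_eq_iff_comap_add_gcd_eq (hperiod hs) ℓ
  rw [hgcd, zpow_neg]
  set m := ℓ.gcd n
  have hnm : n / m * m = n :=
    Nat.div_mul_cancel (Int.natCast_dvd_natCast.1 (Int.gcd_dvd_right ℓ n))
  have hodd : Odd (n / m) := (Nat.odd_mul.1 (hnm.symm ▸ hn)).1
  obtain hd | hd : n / m = 1 ∨ 3 ≤ n / m := by
    obtain ⟨e, he⟩ := hodd
    omega
  · rw [hd, one_mul] at hnm
    rw [hd, IsPrimitiveRoot.one_right_iff] at hw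
    rw [hnm, Set.sep_eq_self_iff_mem_true.2 fun s => hperiod]
    exact map_narayana_eq_ncard_of_two_neg_one (by simp [hw, one_add_one_eq_two]) (by simp) hk hP
  · rw [← hnm] at hk hP
    have hvalue := map_narayana_eq_ncard_of_isPrimitiveRoot hodd hd hw
      (φ := aeval ![ζ ^ ℓ + (ζ ^ ℓ)⁻¹, -1]) (by simp) (by simp) hk hP
    rwa [hnm] at hvalue

end

/-- Dihedral sieving for noncrossing partitions of `ℤ/nℤ` with `n - k` blocks, `n` odd:
the `(s,t)`-Narayana polynomial `P` evaluated at `(ζ^ℓ + ζ^{-ℓ}, -1)` counts the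
noncrossing partitions with `n - k` blocks fixed by the rotation `x ↦ x + ℓ`, and
`P(0,1)` counts those fixed by the reflection `x ↦ -x`. -/
theorem dihedral_sieving_noncrossing_partitions_narayana (n k : ℕ) [NeZero n]
    (hn : Odd n) (hk : k ≤ n - 1)
    (P : MvPolynomial (Fin 2) ℤ)
    (hP : P * (gfib n * gfibFact k * gfibFact (n - k) * gfibFact (k + 1) *
        gfibFact (n - k - 1)) = gfibFact n * gfibFact n) :
    (∀ ℓ : ℤ,
      aeval ![primRoot n ^ ℓ + primRoot n ^ (-ℓ), (-1 : ℂ)] P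
        = (Nat.card {π : Finpartition (Finset.univ : Finset (ZMod n)) //
            IsNoncrossing π ∧ π.parts.card = n - k ∧
              π.parts.image (Finset.image (fun x => x + (ℓ : ZMod n))) = π.parts} : ℂ)) ∧
    aeval ![(0 : ℂ), 1] P
      = (Nat.card {π : Finpartition (Finset.univ : Finset (ZMod n)) //
          IsNoncrossing π ∧ π.parts.card = n - k ∧
            π.parts.image (Finset.image (fun x => -x)) = π.parts} : ℂ) := by
  have hζ : IsPrimitiveRoot (primRoot n) n := Complex.isPrimitiveRoot_exp n (NeZero.ne n)
  have hk' : k < n := by have := NeZero.pos n; omega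
  have hP' := mul_gfibFact_eq_of_mul_gfib_eq hn.pos hP
  refine ⟨fun ℓ => ?_, ?_⟩
  · rw [aeval_narayana_eq_ncard_comap_add hζ hn hk' hP' ℓ, Nat.cast_inj]
    exact (card_isNoncrossing_image_eq (Equiv.addRight (ℓ : ZMod n)) (by simp)).symm
  · rw [map_narayana_eq_ncard_comap_neg (by simp) (by simp) hn hk' hP', Nat.cast_inj]
    exact (card_isNoncrossing_image_eq (Equiv.neg (ZMod n)) (by simp)).symm
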